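/- arXiv:0901.1840 — 7 statements merged into one kernel-verified Lean document; each statement's English description precedes it below -/
import Mathlib

section
/- Let n ≥ 1 and let W be an invertible skew-symmetric real (2n)×(2n) matrix (Wᵀ = −W). Then there exists a real (2n)×(2n) matrix J with Jᵀ·J = 1 and J·J = −1 such that every real (2n)×(2n) matrix A with Aᵀ·A = 1, det A = 1 and Aᵀ·W·A = W commutes with J, i.e. A·J = J·A. (This expresses that the stabilizer in SO(2n) of a non-degenerate 2-form is contained in a subgroup of SO(2n) conjugate to U(n).) -/
open Matrix

/-! Write the polar decomposition `w = j * |w|` with `|w| = √(star w * w)`. If `w` is invertible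
and skew-adjoint, then `j` is unitary and skew-adjoint, whence `j * j = -(star j * j) = -1`.
A unitary `a` preserves the form `w` exactly when it commutes with `w`; it then commutes with
`star w * w`, hence with its square root `|w|` and with `j = w * |w|⁻¹`. -/

open scoped Ring in
theorem commute_ringInverse_left {M₀ : Type*} [MonoidWithZero M₀] {a b : M₀} (h : Commute a b) :
    Commute a⁻¹ʳ b := by
  by_cases ha : IsUnit a
  · obtain ⟨u, rfl⟩ := ha
    rw [Ring.inverse_unit]
    exact h.units_inv_left
  · rw [Ring.inverse_non_unit a ha]
    exact Commute.zero_left b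

theorem mul_self_eq_neg_one_of_mem_unitary_of_mem_skewAdjoint {R : Type*} [Ring R] [StarRing R]
    {j : R} (hj : j ∈ unitary R) (hj_skew : j ∈ skewAdjoint R) : j * j = -1 := by
  rw [← Unitary.star_mul_self_of_mem hj, skewAdjoint.mem_iff.mp hj_skew, neg_mul, neg_neg]

section PolarDecomposition

open scoped Ring

variable {A : Type*} [Ring A] [StarRing A] [TopologicalSpace A] [Algebra ℝ A] [PartialOrder A]
  [StarOrderedRing A] [NonnegSpectrumClass ℝ A] [ContinuousFunctionalCalculus ℝ A IsSelfAdjoint]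

/-- The unitary factor `w |w|⁻¹` of the polar decomposition of an invertible element `w`.
If `|w|` is not invertible, the value is the junk `0`. -/
noncomputable def polarUnitary (w : A) : A :=
  w * (CFC.abs w)⁻¹ʳ

variable [IsTopologicalRing A] [T2Space A]

theorem isUnit_cfcAbs {w : A} (hw : IsUnit w) : IsUnit (CFC.abs w) := by
  rw [← isUnit_mul_self_iff, CFC.abs_mul_abs]
  exact hw.star.mul hw

theorem polarUnitary_mem_unitary {w : A} (hw : IsUnit w) : polarUnitary w ∈ unitary A := by
  obtain ⟨u, rfl⟩ := hw
  obtain ⟨r, hr⟩ := isUnit_cfcAbs u.isUnit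
  have h_star_mul : star u * u = star r * r := by
    ext
    simp only [Units.val_mul, Units.coe_star, hr, (CFC.abs_nonneg (u : A)).star_eq,
      CFC.abs_mul_abs]
  rw [polarUnitary, ← hr, Ring.inverse_unit]
  exact (Units.mul_inv_mem_unitary u r).mpr h_star_mul

theorem commute_polarUnitary {w a : A} (h : Commute w a) (h_star : Commute w (star a)) :
    Commute (polarUnitary w) a :=
  h.mul_left (commute_ringInverse_left (h.cfcAbs_left h_star))

theorem polarUnitary_mem_skewAdjoint {w : A} (hw : w ∈ skewAdjoint A) :
    polarUnitary w ∈ skewAdjoint A := by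
  have hcomm : Commute (CFC.abs w) w :=
    CFC.commute_abs_self w (skewAdjoint.isStarNormal_of_mem hw)
  rw [skewAdjoint.mem_iff, polarUnitary, star_mul, ← Ring.inverse_star,
    (CFC.abs_nonneg w).star_eq, skewAdjoint.mem_iff.mp hw, mul_neg,
    (commute_ringInverse_left hcomm).eq]

theorem stabilizer_of_symplectic_form_in_unitary_general {w : A}
    (hskew : w ∈ skewAdjoint A) (hinv : IsUnit w) :
    ∃ j ∈ unitary A, j * j = -1 ∧ ∀ a ∈ unitary A, star a * w * a = w → Commute a j := by
  have hj := polarUnitary_mem_unitary hinv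
  refine ⟨polarUnitary w, hj, mul_self_eq_neg_one_of_mem_unitary_of_mem_skewAdjoint hj
    (polarUnitary_mem_skewAdjoint hskew), fun a ha haw ↦ ?_⟩
  have hcomm : Commute a w := (commute_unitary_iff_star_left_conjugate ha).mpr haw
  have hstar : Commute w (star a) := by
    rw [← Commute.neg_left_iff, ← skewAdjoint.mem_iff.mp hskew]
    exact hcomm.star_star.symm
  exact (commute_polarUnitary hcomm.symm hstar).symm

end PolarDecomposition

/-- The stabilizer in `SO(2n)` of a non-degenerate 2-form is contained in a
subgroup of `SO(2n)` conjugate to `U(n)`: for any invertible skew-symmetric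
real `(2n)×(2n)` matrix `W` there is an orthogonal complex structure `J`
commuting with every special orthogonal matrix preserving `W`. -/
theorem stabilizer_of_symplectic_form_in_unitary
    (n : ℕ) (hn : 1 ≤ n) (W : Matrix (Fin (2 * n)) (Fin (2 * n)) ℝ)
    (hskew : Wᵀ = -W) (hinv : IsUnit W) :
    ∃ J : Matrix (Fin (2 * n)) (Fin (2 * n)) ℝ,
      Jᵀ * J = 1 ∧ J * J = -1 ∧
      ∀ A : Matrix (Fin (2 * n)) (Fin (2 * n)) ℝ,
        Aᵀ * A = 1 → A.det = 1 → Aᵀ * W * A = W → A * J = J * A := by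
  have hstar (M : Matrix (Fin (2 * n)) (Fin (2 * n)) ℝ) : star M = Mᵀ :=
    conjTranspose_eq_transpose_of_trivial M
  simp only [← hstar] at hskew ⊢
  open scoped MatrixOrder in
  obtain ⟨J, hJ, hJJ, hcomm⟩ := stabilizer_of_symplectic_form_in_unitary_general
    (skewAdjoint.mem_iff.mpr hskew) hinv
  exact ⟨J, Unitary.star_mul_self_of_mem hJ, hJJ, fun A hA _ hAW ↦
    hcomm A (mem_unitaryGroup_iff'.mpr hA) hAW⟩
end

section
/- Let n be a natural number and for each i ∈ {1,…,n} let sᵢ, tᵢ, bᵢ, cᵢ be complex numbers with Σᵢ bᵢ = 0 and Σᵢ cᵢ = 0. Let z, w ∈ ℂ be such that lᵢ := sᵢ·z + tᵢ·w ≠ 0 for every i. Then Σᵢ Σⱼ cᵢ·bⱼ·(sᵢ·tⱼ − tᵢ·sⱼ) / (lᵢ·lⱼ) = 0. -/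
/-!
Contracting `∑ cᵢ dlᵢ / lᵢ` with the Euler vector field gives the constant `∑ cᵢ`, because
each linear form `lᵢ` is homogeneous of degree one. If the coefficients sum to zero, the form
annihilates the position vector `v`. So `d` such forms on a `d`-dimensional space share
the kernel vector `v ≠ 0`, hence are linearly dependent, and their wedge product vanishes.
-/

open Matrix

section LogarithmicForms

variable {K ι σ : Type*} [Field K] [Fintype ι] [Fintype σ]

/-- The logarithmic 1-form `∑ i, c i • dℓᵢ / ℓᵢ` (formally `d log ∏ ℓᵢ ^ cᵢ`) at the point `v` of
`σ → K`. Linear forms and covectors are encoded by their coordinates and paired with vectors by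
the dot product. A form `ℓᵢ` vanishing at `v` contributes zero, since `x / 0 = 0`. -/
def dlogForm (c : ι → K) (ℓ : ι → σ → K) (v : σ → K) : σ → K :=
  ∑ i, (c i / (ℓ i ⬝ᵥ v)) • ℓ i

theorem dlogForm_apply (c : ι → K) (ℓ : ι → σ → K) (v : σ → K) (k : σ) :
    dlogForm c ℓ v k = ∑ i, c i / (ℓ i ⬝ᵥ v) * ℓ i k := by
  simp [dlogForm]

theorem dlogForm_dotProduct_self (c : ι → K) {ℓ : ι → σ → K} {v : σ → K}
    (hℓ : ∀ i, ℓ i ⬝ᵥ v ≠ 0) : dlogForm c ℓ v ⬝ᵥ v = ∑ i, c i := by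
  simp only [dlogForm, sum_dotProduct, smul_dotProduct, smul_eq_mul, div_mul_cancel₀ _ (hℓ _)]

-- The determinant is the coefficient of the wedge product of the rows, taken as covectors.
theorem dlog_wedge_dlog_eq_zero_general [DecidableEq σ] [Nonempty σ] {c : σ → ι → K}
    {ℓ : ι → σ → K} {v : σ → K} (hc : ∀ k, ∑ i, c k i = 0) (hℓ : ∀ i, ℓ i ⬝ᵥ v ≠ 0) :
    (Matrix.of fun k => dlogForm (c k) ℓ v).det = 0 := by
  rcases isEmpty_or_nonempty ι with _ | ⟨⟨i⟩⟩
  · exact det_eq_zero_of_row_eq_zero (Classical.arbitrary σ) fun _ => by simp [dlogForm_apply]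
  · have v_ne_zero : v ≠ 0 := fun hv => hℓ i (by rw [hv, dotProduct_zero])
    have mulVec_v : (Matrix.of fun k => dlogForm (c k) ℓ v) *ᵥ v = 0 :=
      funext fun k => (dlogForm_dotProduct_self (c k) hℓ).trans (hc k)
    exact exists_mulVec_eq_zero_iff.mp ⟨v, v_ne_zero, mulVec_v⟩

theorem det_dlogForm_fin_two (c : Fin 2 → ι → K) (ℓ : ι → Fin 2 → K) (v : Fin 2 → K) :
    (Matrix.of fun k => dlogForm (c k) ℓ v).det =
      ∑ i, ∑ j, c 0 i * c 1 j * (ℓ i 0 * ℓ j 1 - ℓ i 1 * ℓ j 0) /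
        ((ℓ i ⬝ᵥ v) * (ℓ j ⬝ᵥ v)) := by
  simp only [det_fin_two, of_apply, dlogForm_apply, Finset.sum_mul_sum,
    ← Finset.sum_sub_distrib]
  refine Finset.sum_congr rfl fun i _ => Finset.sum_congr rfl fun j _ => ?_
  ring

end LogarithmicForms

/-- For linear forms `lᵢ = sᵢ z + tᵢ w` on `ℂ²` and coefficients with
`∑ bᵢ = ∑ cᵢ = 0`, the 2-form `d log(∏ lᵢ^{cᵢ}) ∧ d log(∏ lᵢ^{bᵢ})` vanishes:
`∑ᵢ ∑ⱼ cᵢ bⱼ (sᵢ tⱼ − tᵢ sⱼ)/(lᵢ lⱼ) = 0` at every point where all `lᵢ ≠ 0`. -/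
theorem dlog_wedge_dlog_eq_zero
    (n : ℕ) (s t b c : Fin n → ℂ)
    (hb : ∑ i, b i = 0) (hc : ∑ i, c i = 0)
    (z w : ℂ) (hl : ∀ i, s i * z + t i * w ≠ 0) :
    ∑ i, ∑ j, c i * b j * (s i * t j - t i * s j) /
      ((s i * z + t i * w) * (s j * z + t j * w)) = 0 := by
  simpa [det_dlogForm_fin_two] using dlog_wedge_dlog_eq_zero_general (c := ![c, b])
    (ℓ := fun i => ![s i, t i]) (v := ![z, w]) (by simp [hb, hc]) (by simpa using hl)
end

section
/- Let n be a natural number; for each i ∈ {1,…,n} let Aᵢ be a 2×2 complex matrix and (sᵢ,tᵢ) ∈ ℂ². Assume: (a) Σᵢ Aᵢ = λ·1 for some λ ∈ ℂ (the identities Σᵢ Aᵢ = (α−1)·Id of the paper), and (b) Aᵢ annihilates the vector (−tᵢ, sᵢ) for every i, i.e. Aᵢ·(−tᵢ, sᵢ)ᵀ = 0 (the kernel of Aᵢ contains the line sᵢz + tᵢw = 0). Then for every (z,w) ∈ ℂ² such that lᵢ := sᵢz + tᵢw ≠ 0 for all i, one has: (1) Σᵢ Σⱼ ((sᵢ·tⱼ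 − tᵢ·sⱼ)/(lᵢ·lⱼ)) · (Aᵢ·Aⱼ) = 0 (the curvature 2-form A ∧ A of the connection ∇ = d + Σᵢ Aᵢ·dlᵢ/lᵢ vanishes), and (2) Σᵢ (1/lᵢ) · Aᵢ·(−tᵢ, sᵢ)ᵀ = 0 (the torsion T(∂/∂z, ∂/∂w) of ∇ vanishes). Hence ∇ is flat and torsion-free. -/
/-!
Write the connection form as `P dz + Q dw`, so that its curvature `A ∧ A` has coefficient `⁅P, Q⁆`.
Contracting the form with the Euler field `z ∂z + w ∂w` gives `z P + w Q = ∑ᵢ Aᵢ`, because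
`dlᵢ / lᵢ` takes the value `1` on that field. If `∑ᵢ Aᵢ` commutes with every `Aᵢ`, then it commutes
with `P` and `Q`, and away from the origin this linear relation forces `P` and `Q` to commute with
each other. The torsion vanishes term by term.
-/

section Commutation

variable {K R : Type*} [Field K] [Ring R] [Algebra K R]

theorem commute_of_commute_smul_add_smul {z w : K} {P Q : R} (hzw : z ≠ 0 ∨ w ≠ 0)
    (hP : Commute P (z • P + w • Q)) (hQ : Commute Q (z • P + w • Q)) : Commute P Q := by
  rcases hzw with hz | hw
  · have hzP : Commute Q (z • P) := by
      simpa using hQ.sub_right ((Commute.refl Q).smul_right w)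
    exact ((Commute.smul_right_iff₀ hz).mp hzP).symm
  · have hwQ : Commute P (w • Q) := by
      simpa using hP.sub_right ((Commute.refl P).smul_right z)
    exact (Commute.smul_right_iff₀ hw).mp hwQ

end Commutation

section LogConnection

variable {ι K : Type*} [Fintype ι] [Field K]

/-- The coefficient of `dx` in the logarithmic connection form `∑ i, A i dlᵢ / lᵢ`, at a point where
the linear form `lᵢ` takes the value `l i`; here `c i` is the coefficient of `x` in `lᵢ`. -/
def logConnectionCoeff {M : Type*} [AddCommMonoid M] [Module K M] (A : ι → M) (l c : ι → K) : M :=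
  ∑ i, (c i / l i) • A i

theorem smul_logConnectionCoeff_add_smul_logConnectionCoeff {M : Type*} [AddCommMonoid M]
    [Module K M] (A : ι → M) {s t : ι → K} {z w : K} (hl : ∀ i, s i * z + t i * w ≠ 0) :
    z • logConnectionCoeff A (fun i => s i * z + t i * w) s +
      w • logConnectionCoeff A (fun i => s i * z + t i * w) t = ∑ i, A i := by
  have euler_apply (i : ι) :
      z * (s i / (s i * z + t i * w)) + w * (t i / (s i * z + t i * w)) = 1 :=
    calc
      _ = (s i * z + t i * w) / (s i * z + t i * w) := by ring
      _ = 1 := div_self (hl i)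
  simp only [logConnectionCoeff, Finset.smul_sum, smul_smul, ← Finset.sum_add_distrib, ← add_smul,
    euler_apply, one_smul]

variable {R : Type*} [Ring R] [Algebra K R] {A : ι → R}

theorem commute_logConnectionCoeff_right {a : R} (h : ∀ i, Commute a (A i)) (l c : ι → K) :
    Commute a (logConnectionCoeff A l c) :=
  Commute.sum_right _ _ _ fun i _ => (h i).smul_right _

theorem lie_logConnectionCoeff (A : ι → R) (l s t : ι → K) :
    ⁅logConnectionCoeff A l s, logConnectionCoeff A l t⁆ =
      ∑ i, ∑ j, ((s i * t j - t i * s j) / (l i * l j)) • (A i * A j) := by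
  simp only [Ring.lie_def, logConnectionCoeff, Finset.sum_mul_sum, smul_mul_smul_comm,
    div_mul_div_comm, ← Finset.sum_sub_distrib, ← sub_smul, ← sub_div]

theorem commute_logConnectionCoeff_of_commute_sum {s t : ι → K} {z w : K}
    (hA : ∀ i, Commute (∑ j, A j) (A i)) (hl : ∀ i, s i * z + t i * w ≠ 0) :
    Commute (logConnectionCoeff A (fun i => s i * z + t i * w) s)
      (logConnectionCoeff A (fun i => s i * z + t i * w) t) := by
  rcases isEmpty_or_nonempty ι with _ | ⟨⟨i⟩⟩
  · simp [logConnectionCoeff]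
  have hzw : z ≠ 0 ∨ w ≠ 0 := by
    by_contra! h
    exact hl i (by simp [h])
  have euler := smul_logConnectionCoeff_add_smul_logConnectionCoeff A hl
  apply commute_of_commute_smul_add_smul hzw <;> rw [euler]
  · exact (commute_logConnectionCoeff_right hA _ s).symm
  · exact (commute_logConnectionCoeff_right hA _ t).symm

theorem connection_flat_and_torsionFree_general
    (A : ι → Matrix (Fin 2) (Fin 2) K) (s t : ι → K)
    (hA : ∀ i, Commute (∑ j, A j) (A i))
    (hker : ∀ i, (A i).mulVec ![-(t i), s i] = 0)
    (z w : K) (hl : ∀ i, s i * z + t i * w ≠ 0) :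
    (∑ i, ∑ j, ((s i * t j - t i * s j) /
        ((s i * z + t i * w) * (s j * z + t j * w))) • (A i * A j) = 0) ∧
    (∑ i, ((s i * z + t i * w)⁻¹) • (A i).mulVec ![-(t i), s i] = 0) := by
  constructor
  · rw [← lie_logConnectionCoeff A (fun i => s i * z + t i * w)]
    exact (commute_logConnectionCoeff_of_commute_sum hA hl).lie_eq
  · exact Finset.sum_eq_zero fun i _ => by rw [hker i, smul_zero]

end LogConnection

/-- Proposition 4.10 of the paper, in coordinates: if `∑ᵢ Aᵢ = λ·Id` and each
`Aᵢ` annihilates the direction `(−tᵢ, sᵢ)` of the line `sᵢ z + tᵢ w = 0`, then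
the connection `∇ = d + ∑ᵢ Aᵢ dlᵢ/lᵢ` on `ℂ²` is flat (its curvature 2-form
`A ∧ A` vanishes) and torsion-free. -/
theorem connection_flat_and_torsionFree
    (n : ℕ) (A : Fin n → Matrix (Fin 2) (Fin 2) ℂ) (s t : Fin n → ℂ) (lam : ℂ)
    (hsum : ∑ i, A i = lam • (1 : Matrix (Fin 2) (Fin 2) ℂ))
    (hker : ∀ i, (A i).mulVec ![-(t i), s i] = 0)
    (z w : ℂ) (hl : ∀ i, s i * z + t i * w ≠ 0) :
    (∑ i, ∑ j, ((s i * t j - t i * s j) /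
        ((s i * z + t i * w) * (s j * z + t j * w))) • (A i * A j) = 0) ∧
    (∑ i, ((s i * z + t i * w)⁻¹) • (A i).mulVec ![-(t i), s i] = 0) :=
  connection_flat_and_torsionFree_general A s t
    (fun i => hsum ▸ (Commute.one_left (A i)).smul_left lam) hker z w hl
end

section
/- Let v₁, v₂, v₃ ∈ ℂ² be pairwise linearly independent vectors and let t₁, t₂, t₃ ∈ ℂ. Then there exists a unique triple (A₁, A₂, A₃) of 2×2 complex matrices such that Aᵢ·vᵢ = 0 and trace(Aᵢ) = tᵢ for i = 1,2,3, and A₁ + A₂ + A₃ = ((t₁ + t₂ + t₃)/2)·1. -/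
/-!
The area form `ω(u, w) = perp u ⬝ᵥ w` on the plane satisfies
`ω(A u, w) + ω(u, A w) = tr A · ω(u, w)`, so `ω(u, A w) = tr A · ω(u, w)` whenever `A u = 0`.

*Uniqueness.* Let `Bᵢ` be the difference of two solutions: `Bᵢ vᵢ = 0`, `tr Bᵢ = 0` and
`B₀ + B₁ + B₂ = 0`. Evaluating the sum at `v₁` gives `B₀ v₁ = -B₂ v₁`, a vector which is
`ω`-orthogonal to both `v₀` and `v₂`, hence zero. So `B₀` kills the basis `v₀, v₁`.

*Existence.* Let `Pᵢⱼ` be the projection onto the line of `vⱼ` along `vᵢ`. It kills `vᵢ`, has trace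
`1`, and `Pᵢⱼ + Pⱼᵢ = 1`. If `2c = t₀ + t₁ + t₂` then the matrices
`Aᵢ = (c - tₖ) Pᵢⱼ + (c - tⱼ) Pᵢₖ`, with `{i, j, k} = {0, 1, 2}`, form a solution.
-/

namespace ThreeLines

open Matrix

section CommRing

variable {R : Type*} [CommRing R]

/-- The vector `u` rotated by a right angle. Pairing with it is the area form on the plane:
`perp u ⬝ᵥ w` is the determinant of the matrix with rows `u` and `w`. -/
def perp (u : Fin 2 → R) : Fin 2 → R := ![-u 1, u 0]

lemma perp_dotProduct (u w : Fin 2 → R) : perp u ⬝ᵥ w = u 0 * w 1 - u 1 * w 0 := by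
  simp only [perp, vec2_dotProduct, cons_val_zero, cons_val_one]
  ring

lemma perp_dotProduct_self (u : Fin 2 → R) : perp u ⬝ᵥ u = 0 := by
  rw [perp_dotProduct]
  ring

lemma perp_dotProduct_swap (u w : Fin 2 → R) : perp w ⬝ᵥ u = -(perp u ⬝ᵥ w) := by
  simp only [perp_dotProduct]
  ring

lemma vecMulVec_perp_sub_swap (u w : Fin 2 → R) :
    vecMulVec w (perp u) - vecMulVec u (perp w) = (perp u ⬝ᵥ w) • (1 : Matrix _ _ R) := by
  rw [perp_dotProduct]
  ext i j
  fin_cases i <;> fin_cases j <;> simp [perp] <;> ring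

lemma perp_dotProduct_smul (u w z : Fin 2 → R) :
    (perp u ⬝ᵥ w) • z = (perp u ⬝ᵥ z) • w - (perp w ⬝ᵥ z) • u := by
  simpa only [sub_mulVec, vecMulVec_mulVec, op_smul_eq_smul, smul_mulVec, one_mulVec] using
    (congrArg (· *ᵥ z) (vecMulVec_perp_sub_swap u w)).symm

lemma perp_mulVec_dotProduct_add (A : Matrix (Fin 2) (Fin 2) R) (u w : Fin 2 → R) :
    perp (A *ᵥ u) ⬝ᵥ w + perp u ⬝ᵥ A *ᵥ w = A.trace * (perp u ⬝ᵥ w) := by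
  simp only [perp_dotProduct]
  simp only [mulVec, vec2_dotProduct, trace_fin_two]
  ring

lemma perp_dotProduct_mulVec_of_mulVec_eq_zero {A : Matrix (Fin 2) (Fin 2) R} {u : Fin 2 → R}
    (hu : A *ᵥ u = 0) (w : Fin 2 → R) :
    perp u ⬝ᵥ A *ᵥ w = A.trace * (perp u ⬝ᵥ w) := by
  simpa [hu, perp_dotProduct 0] using perp_mulVec_dotProduct_add A u w

section NoZeroDivisors

variable [NoZeroDivisors R] {u v w : Fin 2 → R}

lemma eq_zero_of_perp_dotProduct_eq_zero (huw : perp u ⬝ᵥ w ≠ 0) {z : Fin 2 → R}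
    (hu : perp u ⬝ᵥ z = 0) (hw : perp w ⬝ᵥ z = 0) : z = 0 := by
  have hz : (perp u ⬝ᵥ w) • z = 0 := by
    rw [perp_dotProduct_smul, hu, hw, zero_smul, zero_smul, sub_zero]
  exact (smul_eq_zero.mp hz).resolve_left huw

lemma matrix_eq_zero_of_mulVec_eq_zero (huw : perp u ⬝ᵥ w ≠ 0) {A : Matrix (Fin 2) (Fin 2) R}
    (hu : A *ᵥ u = 0) (hw : A *ᵥ w = 0) : A = 0 := by
  have hA : (perp u ⬝ᵥ w) • A = 0 := by
    rw [← mul_one A, ← mul_smul_comm, ← vecMulVec_perp_sub_swap, mul_sub, mul_vecMulVec,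
      mul_vecMulVec, hu, hw, zero_vecMulVec, zero_vecMulVec, sub_zero]
  exact (smul_eq_zero.mp hA).resolve_left huw

lemma eq_zero_of_trace_eq_zero_of_add_add_eq_zero (huv : perp u ⬝ᵥ v ≠ 0) (huw : perp u ⬝ᵥ w ≠ 0)
    {A B C : Matrix (Fin 2) (Fin 2) R} (hA : A *ᵥ u = 0) (hB : B *ᵥ v = 0) (hC : C *ᵥ w = 0)
    (htrA : A.trace = 0) (htrC : C.trace = 0) (hsum : A + B + C = 0) : A = 0 := by
  have hACv : A *ᵥ v = -(C *ᵥ v) := by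
    simpa [add_mulVec, hB, add_eq_zero_iff_eq_neg] using congrArg (· *ᵥ v) hsum
  have hAv : A *ᵥ v = 0 := by
    apply eq_zero_of_perp_dotProduct_eq_zero huw
    · rw [perp_dotProduct_mulVec_of_mulVec_eq_zero hA, htrA, zero_mul]
    · rw [hACv, dotProduct_neg, perp_dotProduct_mulVec_of_mulVec_eq_zero hC, htrC, zero_mul,
        neg_zero]
  exact matrix_eq_zero_of_mulVec_eq_zero huv hA hAv

lemma eq_of_trace_eq_of_add_add_eq {p : Fin 3 → Fin 2 → R}
    (hp : ∀ i j, i ≠ j → perp (p i) ⬝ᵥ p j ≠ 0)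
    {A B : Fin 3 → Matrix (Fin 2) (Fin 2) R} (hA : ∀ i, A i *ᵥ p i = 0) (hB : ∀ i, B i *ᵥ p i = 0)
    (htr : ∀ i, (A i).trace = (B i).trace) (hsum : A 0 + A 1 + A 2 = B 0 + B 1 + B 2) : A = B := by
  funext i
  have hker (j : Fin 3) : (A j - B j) *ᵥ p j = 0 := by rw [sub_mulVec, hA, hB, sub_zero]
  have htr0 (j : Fin 3) : (A j - B j).trace = 0 := by rw [trace_sub, htr, sub_self]
  have hcyc : (A i - B i) + (A (i + 1) - B (i + 1)) + (A (i + 2) - B (i + 2)) = 0 := by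
    rw [← sub_eq_zero.mpr hsum]
    fin_cases i <;> simp <;> abel
  exact sub_eq_zero.mp <| eq_zero_of_trace_eq_zero_of_add_add_eq_zero
    (hp i (i + 1) (by simp)) (hp i (i + 2) (by simp)) (hker _) (hker _) (hker _)
    (htr0 _) (htr0 _) hcyc

end NoZeroDivisors

end CommRing

section Field

variable {K : Type*} [Field K] {u w : Fin 2 → K}

lemma perp_dotProduct_ne_zero_of_linearIndependent (h : LinearIndependent K ![u, w]) :
    perp u ⬝ᵥ w ≠ 0 := by
  have hdet : (of ![u, w]).det ≠ 0 :=
    ((isUnit_iff_isUnit_det _).mp (linearIndependent_rows_iff_isUnit.mp h)).ne_zero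
  rw [perp_dotProduct]
  simpa [det_fin_two] using hdet

/-- The projection onto the line spanned by `w` along the line spanned by `u`. It takes the junk
value `0` if `u` and `w` are linearly dependent. -/
def projAlong (u w : Fin 2 → K) : Matrix (Fin 2) (Fin 2) K :=
  (perp u ⬝ᵥ w)⁻¹ • vecMulVec w (perp u)

lemma projAlong_mulVec_self (u w : Fin 2 → K) : projAlong u w *ᵥ u = 0 := by
  rw [projAlong, smul_mulVec, vecMulVec_mulVec, perp_dotProduct_self, MulOpposite.op_zero,
    zero_smul, smul_zero]

lemma trace_projAlong (h : perp u ⬝ᵥ w ≠ 0) : (projAlong u w).trace = 1 := by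
  rw [projAlong, trace_smul, trace_vecMulVec, dotProduct_comm w, smul_eq_mul, inv_mul_cancel₀ h]

lemma projAlong_add_swap (h : perp u ⬝ᵥ w ≠ 0) : projAlong u w + projAlong w u = 1 := by
  rw [projAlong, projAlong, perp_dotProduct_swap u w, inv_neg, neg_smul, ← sub_eq_add_neg,
    ← smul_sub, vecMulVec_perp_sub_swap, inv_smul_smul₀ h]

/-- The residue with kernel `v i` in the explicit solution of the three-line system with traces `t`
and sum `c • 1`. Indices are taken modulo `3`, so `i`, `i + 1`, `i + 2` are the three lines. -/
def residue (v : Fin 3 → Fin 2 → K) (t : Fin 3 → K) (c : K) (i : Fin 3) :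
    Matrix (Fin 2) (Fin 2) K :=
  (c - t (i + 2)) • projAlong (v i) (v (i + 1)) + (c - t (i + 1)) • projAlong (v i) (v (i + 2))

variable {v : Fin 3 → Fin 2 → K} {t : Fin 3 → K} {c : K}

lemma residue_mulVec_self (v : Fin 3 → Fin 2 → K) (t : Fin 3 → K) (c : K) (i : Fin 3) :
    residue v t c i *ᵥ v i = 0 := by
  rw [residue, add_mulVec, smul_mulVec, smul_mulVec, projAlong_mulVec_self, projAlong_mulVec_self,
    smul_zero, smul_zero, add_zero]

lemma trace_residue (hv : ∀ i j, i ≠ j → perp (v i) ⬝ᵥ v j ≠ 0)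
    (hc : t 0 + t 1 + t 2 = 2 * c) (i : Fin 3) : (residue v t c i).trace = t i := by
  have hcyc : t i + t (i + 1) + t (i + 2) = 2 * c := by
    rw [← hc]
    fin_cases i <;> simp <;> ring
  rw [residue, trace_add, trace_smul, trace_smul, trace_projAlong (hv _ _ (by simp)),
    trace_projAlong (hv _ _ (by simp)), smul_eq_mul, smul_eq_mul]
  linear_combination -hcyc

lemma residue_add_add (hv : ∀ i j, i ≠ j → perp (v i) ⬝ᵥ v j ≠ 0)
    (hc : t 0 + t 1 + t 2 = 2 * c) :
    residue v t c 0 + residue v t c 1 + residue v t c 2 = c • (1 : Matrix (Fin 2) (Fin 2) K) := by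
  let P (i j : Fin 3) := projAlong (v i) (v j)
  have hP (i j : Fin 3) (hij : i ≠ j) : P i j + P j i = 1 := projAlong_add_swap (hv i j hij)
  calc residue v t c 0 + residue v t c 1 + residue v t c 2
      = ((c - t 2) • P 0 1 + (c - t 1) • P 0 2) + ((c - t 0) • P 1 2 + (c - t 2) • P 1 0)
        + ((c - t 1) • P 2 0 + (c - t 0) • P 2 1) := rfl
    _ = (c - t 2) • (P 0 1 + P 1 0) + (c - t 1) • (P 0 2 + P 2 0)
        + (c - t 0) • (P 1 2 + P 2 1) := by module
    _ = (3 * c - (t 0 + t 1 + t 2)) • 1 := by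
      rw [hP 0 1 (by decide), hP 0 2 (by decide), hP 1 2 (by decide)]
      module
    _ = c • 1 := by rw [hc]; module

end Field

end ThreeLines

open Matrix ThreeLines in
theorem residues_unique_for_three_lines_general {K : Type*} [Field K]
    (v : Fin 3 → (Fin 2 → K))
    (hv : ∀ i j, i ≠ j → LinearIndependent K ![v i, v j])
    (t : Fin 3 → K) (c : K) (hc : t 0 + t 1 + t 2 = 2 * c) :
    ∃! A : Fin 3 → Matrix (Fin 2) (Fin 2) K,
      (∀ i, (A i).mulVec (v i) = 0) ∧
      (∀ i, (A i).trace = t i) ∧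
      A 0 + A 1 + A 2 = c • (1 : Matrix (Fin 2) (Fin 2) K) := by
  have hω (i j : Fin 3) (hij : i ≠ j) : perp (v i) ⬝ᵥ v j ≠ 0 :=
    perp_dotProduct_ne_zero_of_linearIndependent (hv i j hij)
  have htr := trace_residue hω hc
  have hsum := residue_add_add hω hc
  refine ⟨residue v t c, ⟨residue_mulVec_self v t c, htr, hsum⟩, ?_⟩
  rintro A ⟨hAker, hAtr, hAsum⟩
  exact eq_of_trace_eq_of_add_add_eq hω hAker (residue_mulVec_self v t c)
    (fun i => (hAtr i).trans (htr i).symm) (hAsum.trans hsum.symm)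

/-- The case `n = 3` of the system (6) of the paper: for three pairwise
linearly independent vectors `v₁, v₂, v₃ ∈ ℂ²` and traces `t₁, t₂, t₃`, there
is a unique triple of `2×2` matrices `Aᵢ` with `Aᵢ vᵢ = 0`, `tr Aᵢ = tᵢ` and
`A₁ + A₂ + A₃ = ((t₁+t₂+t₃)/2)·Id`. -/
theorem residues_unique_for_three_lines
    (v : Fin 3 → (Fin 2 → ℂ))
    (hv : ∀ i j, i ≠ j → LinearIndependent ℂ ![v i, v j])
    (t : Fin 3 → ℂ) :
    ∃! A : Fin 3 → Matrix (Fin 2) (Fin 2) ℂ,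
      (∀ i, (A i).mulVec (v i) = 0) ∧
      (∀ i, (A i).trace = t i) ∧
      A 0 + A 1 + A 2 = ((t 0 + t 1 + t 2) / 2) • (1 : Matrix (Fin 2) (Fin 2) ℂ) :=
  residues_unique_for_three_lines_general v hv t _ (by ring)
end

section
/- Let L be a finite set of N pairwise distinct lines in ℂP² (2-dimensional ℂ-subspaces of ℂ³) such that every point lies on fewer than 2N/3 of the lines, i.e. 3·μ(p) < 2·N for every point p. Then, summing over the (finitely many) multiple points, 3·Σ_{p : μ(p) ≥ 2} μ(p) ≥ N² + 3N. -/
/-!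
Write the `N` lines as `v = sᵢ u + tᵢ` in an affine chart, and consider the polynomials `F(u, v, s)`
on the variety of flags (a point `(u, v)` with a line of slope `s` through it) of degree at most `n`
in `s` and of degree less than `a` on the flags of every line. Require `F` to vanish to order `κ p`
at each multiple point `p`, and then to weighted order `3n` along the flags of each of the `N`
lines, where `v` has weight `N` and `s` has weight `3`. The zeros already forced at the multiple
points make the conditions along the lines fewer.

The restriction to `u = 0` of a polynomial satisfying all conditions along the lines has weighted
order at least `3n` at each `(tᵢ, sᵢ)`. A polynomial `f(v, s)` satisfies the inequality
`∑ᵢ ordᵢ f ≤ N (deg f + deg_s f)`: for irreducible `f` with `deg_s f ≥ 2`, compare the zeros and the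
degree of its discriminant; for `deg_s f = 1`, use `μ(p) ≤ 2N/3`. So few such restrictions exist,
and dividing by `u` when the restriction is zero bounds the dimension of the space of these `F`.

Comparing dimensions for `n = 2Nm`, `a = 6Nm` and `κ p = 3 μ(p) m` as `m → ∞` gives the theorem.
-/

/-- The multiplicity of a point `p` of `ℂP²` (a 1-dimensional subspace of `ℂ³`)
with respect to an arrangement of lines `L` (2-dimensional subspaces):
the number of lines of `L` containing `p`. -/
noncomputable def lineMult (L : Finset (Submodule ℂ (Fin 3 → ℂ)))
    (p : Submodule ℂ (Fin 3 → ℂ)) : ℕ :=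
  Set.ncard {ℓ : Submodule ℂ (Fin 3 → ℂ) | ℓ ∈ L ∧ p ≤ ℓ}

namespace LineArrangement

set_option maxSynthPendingDepth 3

open Polynomial

section GradedDiscriminant

variable {R : Type*} [CommRing R] {A : ℤ → AddSubgroup R}

lemma natCast_mul_mem_graded {e : ℤ} {x : R} (n : ℕ) (hx : x ∈ A e) : (n : R) * x ∈ A e :=
  nsmul_eq_mul n x ▸ nsmul_mem hx n

lemma derivative_coeff_mem_graded {g : R[X]} {α γ : ℤ} (hg : ∀ k : ℕ, g.coeff k ∈ A (α - γ * k))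
    (k : ℕ) : g.derivative.coeff k ∈ A (α - γ - γ * k) := by
  have h := natCast_mul_mem_graded (k + 1) (hg (k + 1))
  rw [show α - γ * (k + 1 : ℕ) = α - γ - γ * k by push_cast; ring] at h
  rw [coeff_derivative, mul_comm (g.coeff _)]
  exact_mod_cast h

lemma sylvester_mem_graded {f g : R[X]} {α β γ : ℤ} (hf : ∀ k : ℕ, f.coeff k ∈ A (α - γ * k))
    (hg : ∀ k : ℕ, g.coeff k ∈ A (β - γ * k)) (m n : ℕ) (i j : Fin (m + n)) :
    f.sylvester g m n i j ∈
      A (-γ * (i : ℕ) + Fin.addCases (fun j : Fin m => β + γ * (j : ℕ))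
        (fun j : Fin n => α + γ * (j : ℕ)) j) := by
  induction j using Fin.addCases with
  | left j =>
    simp only [sylvester, Matrix.of_apply, Fin.addCases_left]
    split_ifs with h
    · convert hg (i - j) using 2
      rw [Nat.cast_sub h.1]; ring
    · exact zero_mem _
  | right j =>
    simp only [sylvester, Matrix.of_apply, Fin.addCases_right]
    split_ifs with h
    · convert hf (i - j) using 2
      rw [Nat.cast_sub h.1]; ring
    · exact zero_mem _

variable [SetLike.GradedMonoid A]

lemma det_mem_graded {n : Type*} [Fintype n] [DecidableEq n] {M : Matrix n n R} {r c : n → ℤ}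
    (hM : ∀ i j, M i j ∈ A (r i + c j)) : M.det ∈ A (∑ i, r i + ∑ j, c j) := by
  rw [Matrix.det_apply]
  refine sum_mem fun σ _ => ?_
  have hprod : ∏ j, M (σ j) j ∈ A (∑ j, (r (σ j) + c j)) :=
    SetLike.prod_mem_graded A _ _ fun j _ => hM (σ j) j
  rw [Finset.sum_add_distrib, Equiv.sum_comp σ r] at hprod
  exact zsmul_mem hprod _

/-- The correction in row `2 * g.natDegree - 2` is there because `sylvesterDeriv` has the leading
coefficient of `g` divided out of that row. -/
lemma sylvesterDeriv_mem_graded {g : R[X]} (hg₀ : g.natDegree ≠ 0) {α γ : ℤ}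
    (hg : ∀ k : ℕ, g.coeff k ∈ A (α - γ * k)) (i j : Fin (g.natDegree - 1 + g.natDegree)) :
    g.sylvesterDeriv i j ∈
      A ((-γ * (i : ℕ) -
          if i = ⟨2 * g.natDegree - 2, by lia⟩ then α - γ * g.natDegree else 0) +
        Fin.addCases (fun j : Fin (g.natDegree - 1) => α + γ * (j : ℕ))
          (fun j : Fin g.natDegree => α - γ + γ * (j : ℕ)) j) := by
  rw [sylvesterDeriv, dif_neg hg₀, Matrix.updateRow_apply]
  by_cases hi : i = ⟨2 * g.natDegree - 2, by lia⟩
  · have one_mem : (1 : R) ∈ A 0 := SetLike.GradedOne.one_mem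
    have hcast : ((i : ℕ) : ℤ) = 2 * g.natDegree - 2 := by rw [hi]; lia
    rw [if_pos hi, if_pos hi, hcast]
    induction j using Fin.addCases with
    | left j =>
      have hj := j.isLt
      simp only [Fin.addCases_left, Fin.val_castAdd]
      rw [if_neg (show (j : ℕ) ≠ 2 * g.natDegree - 2 by lia)]
      split_ifs with h
      · convert one_mem using 2
        rw [show ((j : ℕ) : ℤ) = g.natDegree - 2 by lia]; ring
      · exact zero_mem _
    | right j =>
      simp only [Fin.addCases_right, Fin.val_natAdd]
      by_cases h : g.natDegree - 1 + (j : ℕ) = 2 * g.natDegree - 2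
      · have hmem : (if g.natDegree - 1 + (j : ℕ) = g.natDegree - 2 then 1 else
            (g.natDegree : R)) = g.natDegree := by
          split_ifs
          · rw [show g.natDegree = 1 by lia, Nat.cast_one]
          · rfl
        rw [if_pos h, hmem]
        convert natCast_mul_mem_graded g.natDegree one_mem using 1
        · rw [show ((j : ℕ) : ℤ) = g.natDegree - 1 by lia]; congr 1; ring
        · rw [mul_one]
      · rw [if_neg h, if_neg (by lia)]
        exact zero_mem _
  · rw [if_neg hi, if_neg hi, sub_zero]
    exact sylvester_mem_graded (derivative_coeff_mem_graded hg) hg _ _ i j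

lemma discr_mem_graded {g : R[X]} (hg₀ : g.natDegree ≠ 0) {α γ : ℤ}
    (hg : ∀ k : ℕ, g.coeff k ∈ A (α - γ * k)) :
    g.discr ∈ A ((g.natDegree - 1) * (2 * α - γ * g.natDegree)) := by
  have hdet := det_mem_graded (sylvesterDeriv_mem_graded hg₀ hg)
  rw [Finset.sum_sub_distrib, Finset.sum_ite_eq' _ _, if_pos (Finset.mem_univ _),
    Fin.sum_univ_add, Fin.sum_univ_add] at hdet
  simp only [Fin.addCases_left, Fin.addCases_right, Fin.val_castAdd, Fin.val_natAdd,
    Finset.sum_add_distrib, Finset.sum_const, Finset.card_univ, Fintype.card_fin, nsmul_eq_mul,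
    ← Finset.mul_sum, Nat.cast_add, Nat.cast_pred (Nat.pos_of_ne_zero hg₀)] at hdet
  rw [discr]
  rcases neg_one_pow_eq_or R (g.natDegree * (g.natDegree - 1) / 2) with h | h
  · rw [h, mul_one]
    convert hdet using 2
    ring
  · rw [h, mul_neg_one, neg_mem_iff]
    convert hdet using 2
    ring

end GradedDiscriminant

section Discriminant

lemma taylor_derivative {R : Type*} [CommRing R] (g : R[X]) (r : R) :
    taylor r (derivative g) = derivative (taylor r g) := by
  simp [taylor_apply, derivative_comp]

lemma discr_taylor {R : Type*} [CommRing R] [IsDomain R] [CharZero R] (g : R[X]) (r : R) :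
    (taylor r g).discr = g.discr := by
  by_cases hg : g.natDegree = 0
  · obtain ⟨a, rfl⟩ := natDegree_eq_zero.1 hg
    rw [taylor_C]
  have hpos : 0 < g.degree := natDegree_pos_iff_degree_pos.1 (Nat.pos_of_ne_zero hg)
  have hres := resultant_taylor g (derivative g) r
  rw [taylor_derivative, natDegree_derivative, natDegree_derivative, natDegree_taylor,
    resultant_deriv hpos] at hres
  have htaylor := resultant_deriv (f := taylor r g) (by rwa [degree_taylor])
  rw [natDegree_taylor, leadingCoeff_taylor, hres] at htaylor
  refine (mul_left_cancel₀ (mul_ne_zero (by simp) ?_) htaylor).symm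
  exact leadingCoeff_ne_zero.2 (ne_zero_of_degree_gt hpos)

lemma discr_ne_zero_of_irreducible {R : Type*} [CommRing R] [IsDomain R] [IsGCDMonoid R]
    [CharZero R] {g : R[X]} (hg : Irreducible g) (hg₀ : g.natDegree ≠ 0) : g.discr ≠ 0 := by
  have hinj : Function.Injective (algebraMap R (FractionRing R)) := IsFractionRing.injective _ _
  have : CharZero (FractionRing R) := charZero_of_injective_algebraMap hinj
  have hirr := ((hg.isPrimitive hg₀).irreducible_iff_irreducible_map_fraction_map
    (K := FractionRing R)).1 hg
  have hres := resultant_ne_zero _ _ hirr.separable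
  rw [derivative_map, natDegree_map_eq_of_injective hinj, natDegree_map_eq_of_injective hinj,
    resultant_map_map, natDegree_derivative,
    resultant_deriv (natDegree_pos_iff_degree_pos.1 (Nat.pos_of_ne_zero hg₀))] at hres
  rintro h
  simp [h] at hres

end Discriminant

section Recenter

variable {R : Type*} [CommRing R]

/-- The change of variables `X ↦ X + a`, `Y ↦ Y + b` on `R[X][Y]`, so that the coefficients of
`recenter a b f` are the Taylor coefficients of `f` at the point `(a, b)`. -/
noncomputable def recenter (a b : R) : R[X][X] →ₐ[R] R[X][X] :=
  (mapAlgHom (taylorAlgHom a)).comp ((taylorAlgHom (C b)).restrictScalars R)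

lemma recenter_apply (a b : R) (f : R[X][X]) :
    recenter a b f = (taylor (C b) f).map (taylorAlgHom a : R[X] →+* R[X]) := rfl

lemma recenter_coeff (a b : R) (f : R[X][X]) (k : ℕ) :
    (recenter a b f).coeff k = taylor a ((taylor (C b) f).coeff k) := by
  rw [recenter_apply, coeff_map]
  rfl

lemma recenter_injective (a b : R) : Function.Injective (recenter a b) :=
  (map_injective _ (taylor_injective a)).comp (taylor_injective (C b))

lemma coeff_coeff_zero_recenter (a b : R) (f : R[X][X]) :
    ((recenter a b f).coeff 0).coeff 0 = f.evalEval a b := by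
  rw [recenter_coeff, taylor_coeff_zero, taylor_coeff_zero]

lemma recenter_coeff_natDegree (a b : R) (f : R[X][X]) :
    (recenter a b f).coeff f.natDegree = taylor a f.leadingCoeff := by
  rw [recenter_coeff, coeff_taylor_natDegree]

end Recenter

section WeightedOrder

variable {R : Type*} [CommRing R]

/-- Given `ψ : S → S[T]`, the extension `S[X] → S[X][T]` of `ψ` sending `X` to `X * T ^ q`. -/
noncomputable def weightExtension {S : Type*} [CommRing S] (q : ℕ) (ψ : S →+* S[X]) :
    S[X] →+* S[X][X] :=
  eval₂RingHom ((mapRingHom C).comp ψ) (C X * X ^ q)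

lemma weightExtension_coeff {S : Type*} [CommRing S] (q : ℕ) (ψ : S →+* S[X]) (f : S[X])
    (e k : ℕ) : ((weightExtension q ψ f).coeff e).coeff k =
      if q * k ≤ e then (ψ (f.coeff k)).coeff (e - q * k) else 0 := by
  induction f using Polynomial.induction_on' with
  | add f g hf hg => simp only [map_add, coeff_add, hf, hg]; split_ifs <;> simp
  | monomial n a =>
    have hmonomial : weightExtension q ψ (monomial n a) =
        C (X ^ n) * (mapRingHom C (ψ a) * X ^ (q * n)) := by
      simp only [weightExtension, coe_eval₂RingHom, eval₂_monomial, RingHom.coe_comp,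
        Function.comp_apply, mul_pow, pow_mul, C_pow]
      ring
    rw [hmonomial, coeff_C_mul, coeff_mul_X_pow', coe_mapRingHom, coeff_map, coeff_monomial]
    by_cases hk : n = k
    · subst hk
      rw [if_pos rfl]
      split_ifs <;> simp
    · rw [if_neg hk, map_zero, coeff_zero, ite_self]
      split_ifs
      · rw [coeff_mul_C, coeff_X_pow, if_neg (Ne.symm hk), zero_mul]
      · simp

/-- The substitution `X ↦ X * T ^ p`, `Y ↦ Y * T ^ q` on `R[X][Y]`, whose values are polynomials in
`T`: the coefficient of `T ^ e` is the part of weight `e` for the weights `p` and `q`. -/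
noncomputable def weightHom (p q : ℕ) : R[X][X] →+* R[X][X][X] :=
  weightExtension q (weightExtension p C)

lemma weightHom_coeff (p q : ℕ) (f : R[X][X]) (e k j : ℕ) :
    (((weightHom p q f).coeff e).coeff k).coeff j =
      if p * j + q * k = e then (f.coeff k).coeff j else 0 := by
  rw [weightHom, weightExtension_coeff]
  split_ifs with h₁ h₂ h₂
  · rw [weightExtension_coeff, if_pos (by lia), coeff_C, if_pos (by lia)]
  · rw [weightExtension_coeff, coeff_C]
    split_ifs <;> first | rfl | lia
  · lia
  · rw [coeff_zero]

lemma weightHom_injective (p q : ℕ) : Function.Injective (weightHom (R := R) p q) := by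
  rw [injective_iff_map_eq_zero]
  intro f hf
  ext k j
  have h := weightHom_coeff p q f (p * j + q * k) k j
  rw [if_pos rfl, hf] at h
  simpa using h.symm

lemma weightHom_coeff_eq_zero_iff (p q : ℕ) (f : R[X][X]) (e : ℕ) :
    (weightHom p q f).coeff e = 0 ↔ ∀ j k, (f.coeff k).coeff j ≠ 0 → p * j + q * k ≠ e := by
  constructor
  · rintro h j k hjk rfl
    have := weightHom_coeff p q f (p * j + q * k) k j
    rw [if_pos rfl, h] at this
    exact hjk (by simpa using this.symm)
  · intro h
    ext k j
    rw [weightHom_coeff]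
    split_ifs with hjk
    · by_contra hne
      exact h j k (by simpa using hne) hjk
    · simp

/-- The order of vanishing of `f : R[X][Y]` at the origin when `X` and `Y` have the weights `p`
and `q` (with the value `0` at `f = 0`). -/
noncomputable def weightedOrder (p q : ℕ) (f : R[X][X]) : ℕ :=
  (weightHom p q f).natTrailingDegree

/-- The total degree of `f : R[X][Y]`. -/
noncomputable def totalDegree (f : R[X][X]) : ℕ :=
  (weightHom 1 1 f).natDegree

lemma weightedOrder_le {p q : ℕ} {f : R[X][X]} {j k : ℕ} (h : (f.coeff k).coeff j ≠ 0) :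
    weightedOrder p q f ≤ p * j + q * k :=
  natTrailingDegree_le_of_ne_zero fun h₀ =>
    (weightHom_coeff_eq_zero_iff p q f _).1 h₀ j k h rfl

lemma le_weightedOrder {p q e : ℕ} {f : R[X][X]} (hf : f ≠ 0)
    (h : ∀ j k, (f.coeff k).coeff j ≠ 0 → e ≤ p * j + q * k) : e ≤ weightedOrder p q f := by
  refine le_natTrailingDegree ((map_ne_zero_iff _ (weightHom_injective p q)).2 hf) fun m hm => ?_
  refine (weightHom_coeff_eq_zero_iff p q f m).2 fun j k hjk heq => ?_
  have := h j k hjk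
  lia

lemma le_totalDegree {f : R[X][X]} {j k : ℕ} (h : (f.coeff k).coeff j ≠ 0) :
    j + k ≤ totalDegree f :=
  le_natDegree_of_ne_zero fun h₀ =>
    (weightHom_coeff_eq_zero_iff 1 1 f _).1 h₀ j k h (by lia)

lemma totalDegree_le {f : R[X][X]} {e : ℕ} (h : ∀ j k, (f.coeff k).coeff j ≠ 0 → j + k ≤ e) :
    totalDegree f ≤ e := by
  refine natDegree_le_iff_coeff_eq_zero.2 fun m hm => ?_
  refine (weightHom_coeff_eq_zero_iff 1 1 f m).2 fun j k hjk heq => ?_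
  have := h j k hjk
  lia

variable [IsDomain R]

lemma weightedOrder_mul (p q : ℕ) {f g : R[X][X]} (hf : f ≠ 0) (hg : g ≠ 0) :
    weightedOrder p q (f * g) = weightedOrder p q f + weightedOrder p q g := by
  have hinj := weightHom_injective (R := R) p q
  rw [weightedOrder, map_mul, natTrailingDegree_mul ((map_ne_zero_iff _ hinj).2 hf)
    ((map_ne_zero_iff _ hinj).2 hg), weightedOrder, weightedOrder]

lemma totalDegree_mul {f g : R[X][X]} (hf : f ≠ 0) (hg : g ≠ 0) :
    totalDegree (f * g) = totalDegree f + totalDegree g := by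
  have hinj := weightHom_injective (R := R) 1 1
  rw [totalDegree, map_mul, natDegree_mul ((map_ne_zero_iff _ hinj).2 hf)
    ((map_ne_zero_iff _ hinj).2 hg), totalDegree, totalDegree]

end WeightedOrder

section TaylorFiltration

variable {R : Type*} [CommRing R]

/-- The polynomials all of whose monomials `(X - t) ^ l` satisfy `e ≤ c * l`. For `c > 0` this
filters by the order of vanishing at `t`, for `c = -1` by the degree. -/
noncomputable def taylorFiltration (c : ℤ) (t : R) (e : ℤ) : AddSubgroup R[X] where
  carrier := {P | ∀ l : ℕ, (taylor t P).coeff l ≠ 0 → e ≤ c * l}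
  zero_mem' := by simp
  add_mem' {P Q} hP hQ l hl := by
    by_cases h : (taylor t P).coeff l = 0
    · exact hQ l fun h' => hl (by simp [h, h'])
    · exact hP l h
  neg_mem' {P} hP l hl := hP l (by simpa using hl)

instance (c : ℤ) (t : R) : SetLike.GradedMonoid (taylorFiltration c t) where
  one_mem l hl := by
    rw [taylor_one, map_one, coeff_one] at hl
    split_ifs at hl with h
    · simp [h]
    · exact absurd rfl hl
  mul_mem d e P Q hP hQ l hl := by
    rw [taylor_mul, coeff_mul] at hl
    obtain ⟨x, hx, hne⟩ := Finset.exists_ne_zero_of_sum_ne_zero hl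
    have hxl : (l : ℤ) = x.1 + x.2 := mod_cast (Finset.HasAntidiagonal.mem_antidiagonal.1 hx).symm
    rw [hxl, mul_add]
    exact add_le_add (hP x.1 (left_ne_zero_of_mul hne)) (hQ x.2 (right_ne_zero_of_mul hne))

lemma taylor_coeff_rootMultiplicity_ne_zero {P : R[X]} (hP : P ≠ 0) (t : R) :
    (taylor t P).coeff (P.rootMultiplicity t) ≠ 0 := by
  rw [rootMultiplicity_eq_natTrailingDegree, ← taylor_apply]
  exact trailingCoeff_nonzero_iff_nonzero.2 ((taylor_eq_zero t P).not.2 hP)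

lemma le_mul_rootMultiplicity_of_mem_taylorFiltration {c : ℤ} {t : R} {e : ℤ} {P : R[X]}
    (hP₀ : P ≠ 0) (hP : P ∈ taylorFiltration c t e) : e ≤ c * P.rootMultiplicity t :=
  hP _ (taylor_coeff_rootMultiplicity_ne_zero hP₀ t)

lemma le_neg_natDegree_of_mem_taylorFiltration {e : ℤ} {P : R[X]}
    (hP₀ : P ≠ 0) (hP : P ∈ taylorFiltration (-1) 0 e) : e ≤ -P.natDegree := by
  have h := hP P.natDegree (by rwa [taylor_zero, coeff_natDegree, leadingCoeff_ne_zero])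
  linarith

lemma taylor_coeff_mem_taylorFiltration (p q : ℕ) (t s : R) (g : R[X][X]) (k : ℕ) :
    (taylor (C s) g).coeff k ∈
      taylorFiltration p t (weightedOrder p q (recenter t s g) - q * k) := by
  intro l hl
  have h := weightedOrder_le (p := p) (q := q) (j := l) (recenter_coeff t s g k ▸ hl)
  zify at h
  linarith

lemma coeff_mem_taylorFiltration (g : R[X][X]) (k : ℕ) :
    g.coeff k ∈ taylorFiltration (-1) 0 (-totalDegree g - (-1) * k) := by
  intro l hl
  rw [taylor_zero] at hl
  have h := le_totalDegree hl
  zify at h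
  linarith

lemma sum_rootMultiplicity_le [IsDomain R] (P : R[X]) (S : Finset R) :
    ∑ t ∈ S, P.rootMultiplicity t ≤ P.natDegree := by
  classical
  calc ∑ t ∈ S, P.rootMultiplicity t = ∑ t ∈ S, P.roots.count t := by simp
    _ ≤ ∑ t ∈ S ∪ P.roots.toFinset, P.roots.count t :=
      Finset.sum_le_sum_of_subset Finset.subset_union_left
    _ = P.roots.card := Multiset.sum_count_eq_card fun t ht => by simp [Multiset.mem_toFinset.2 ht]
    _ ≤ P.natDegree := card_roots' P

end TaylorFiltration

section SlopeInequality

variable {K ι : Type*} [Field K] [Fintype ι] {s t : ι → K}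

open Classical in
/-- The lines through `p`, where `i` stands for the line `v = s i * u + t i` of the affine plane. -/
noncomputable def linesThrough (s t : ι → K) (p : K × K) : Finset ι :=
  {i | s i * p.1 + t i = p.2}

lemma mem_linesThrough {p : K × K} {i : ι} : i ∈ linesThrough s t p ↔ s i * p.1 + t i = p.2 := by
  simp [linesThrough]

lemma sum_rootMultiplicity_comp_le (ht : Function.Injective t) (P : K[X]) :
    ∑ i, P.rootMultiplicity (t i) ≤ P.natDegree := by
  simpa using sum_rootMultiplicity_le P (Finset.univ.map ⟨t, ht⟩)

lemma sum_weightedOrder_le_of_two_le_natDegree [CharZero K] (ht : Function.Injective t)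
    {g : K[X][X]} (hg : Irreducible g) (hb : 2 ≤ g.natDegree) :
    ∑ i, weightedOrder (Fintype.card ι) 3 (recenter (t i) (s i) g) ≤
      Fintype.card ι * (totalDegree g + g.natDegree) := by
  have hg₀ : g.natDegree ≠ 0 := by lia
  have hdiscr := discr_ne_zero_of_irreducible hg hg₀
  have hdegree : ((g.natDegree : ℤ) - 1) * (g.natDegree - 2 * totalDegree g) ≤
      -g.discr.natDegree := by
    convert le_neg_natDegree_of_mem_taylorFiltration hdiscr
      (discr_mem_graded hg₀ (coeff_mem_taylorFiltration g)) using 2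
    ring
  have horder (i : ι) : ((g.natDegree : ℤ) - 1) *
      (2 * weightedOrder (Fintype.card ι) 3 (recenter (t i) (s i) g) - 3 * g.natDegree) ≤
      Fintype.card ι * g.discr.rootMultiplicity (t i) := by
    have h := discr_mem_graded (g := taylor (C (s i)) g) (by rwa [natDegree_taylor])
      (taylor_coeff_mem_taylorFiltration (Fintype.card ι) 3 (t i) (s i) g)
    rw [discr_taylor, natDegree_taylor] at h
    exact le_mul_rootMultiplicity_of_mem_taylorFiltration hdiscr h
  have hroots : ∑ i, (g.discr.rootMultiplicity (t i) : ℤ) ≤ g.discr.natDegree :=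
    mod_cast sum_rootMultiplicity_comp_le ht g.discr
  have hsum := Finset.sum_le_sum fun i (_ : i ∈ Finset.univ) => horder i
  simp only [← Finset.mul_sum, Finset.sum_sub_distrib, Finset.sum_const, Finset.card_univ,
    nsmul_eq_mul] at hsum
  have hmul := mul_le_mul_of_nonneg_left (hroots.trans (le_neg_of_le_neg hdegree))
    (Int.natCast_nonneg (Fintype.card ι))
  have hcancel := le_of_mul_le_mul_left
    ((hsum.trans hmul).trans_eq (by ring : _ = ((g.natDegree : ℤ) - 1) *
      (Fintype.card ι * (2 * totalDegree g - g.natDegree)))) (by lia)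
  zify
  linarith

lemma sum_weightedOrder_le_of_natDegree_eq_zero (ht : Function.Injective t)
    {g : K[X][X]} (hg : g ≠ 0) (hb : g.natDegree = 0) :
    ∑ i, weightedOrder (Fintype.card ι) 3 (recenter (t i) (s i) g) ≤
      Fintype.card ι * (totalDegree g + g.natDegree) := by
  obtain ⟨P, rfl⟩ := natDegree_eq_zero.1 hb
  have hP : P ≠ 0 := by simpa using hg
  have horder (i : ι) : weightedOrder (Fintype.card ι) 3 (recenter (t i) (s i) (C P)) ≤
      Fintype.card ι * P.rootMultiplicity (t i) := by
    refine (weightedOrder_le (j := P.rootMultiplicity (t i)) (k := 0) ?_).trans_eq (by simp)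
    rw [recenter_coeff, taylor_C, coeff_C_zero]
    exact taylor_coeff_rootMultiplicity_ne_zero hP _
  have hdegree : P.natDegree ≤ totalDegree (C P) := by
    simpa using le_totalDegree (f := C P) (j := P.natDegree) (k := 0) (by simpa using hP)
  calc ∑ i, weightedOrder (Fintype.card ι) 3 (recenter (t i) (s i) (C P))
      ≤ ∑ i, Fintype.card ι * P.rootMultiplicity (t i) := Finset.sum_le_sum fun i _ => horder i
    _ = Fintype.card ι * ∑ i, P.rootMultiplicity (t i) := by rw [Finset.mul_sum]
    _ ≤ Fintype.card ι * (totalDegree (C P) + (C P).natDegree) := by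
      gcongr
      exact (sum_rootMultiplicity_comp_le ht P).trans (hdegree.trans (Nat.le_add_right _ _))

lemma weightedOrder_recenter_eq_zero {p q : ℕ} {a b : K} {g : K[X][X]}
    (h : g.evalEval a b ≠ 0) : weightedOrder p q (recenter a b g) = 0 := by
  simpa using weightedOrder_le (p := p) (q := q) (j := 0) (k := 0)
    ((coeff_coeff_zero_recenter a b g).trans_ne h)

lemma weightedOrder_recenter_le_of_natDegree_eq_one {p q : ℕ} {g : K[X][X]} (hg : Irreducible g)
    (hb : g.natDegree = 1) (a b : K) : weightedOrder p q (recenter a b g) ≤ q := by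
  by_cases heval : g.evalEval a b = 0
  · refine (weightedOrder_le (j := 0) (k := 1) ?_).trans_eq (by simp)
    intro hlead
    rw [← hb, recenter_coeff_natDegree, taylor_coeff_zero] at hlead
    have hdvd : C (X - C a) ∣ taylor (C b) g := by
      refine C_dvd_iff_dvd_coeff _ _ |>.2 fun k => dvd_iff_isRoot.2 ?_
      match k with
      | 0 => rwa [IsRoot, taylor_coeff_zero]
      | 1 => rwa [IsRoot, ← hb, coeff_taylor_natDegree]
      | k + 2 =>
        rw [coeff_eq_zero_of_natDegree_lt (by rw [natDegree_taylor]; lia)]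
        simp
    have hdvd' : C (X - C a) ∣ g := by
      simpa [taylor_taylor] using map_dvd (taylorAlgHom (-C b)) hdvd
    exact (irreducible_X_sub_C a).not_isUnit (hg.isPrimitive (by lia) _ hdvd')
  · simp [weightedOrder_recenter_eq_zero heval]

lemma exists_affine_of_totalDegree_le_one {g : K[X][X]} (hb : g.natDegree = 1)
    (hg : totalDegree g ≤ 1) :
    ∃ c₀ c₁ c₂ : K, c₂ ≠ 0 ∧ ∀ a b, g.evalEval a b = c₀ + c₁ * a + c₂ * b := by
  obtain ⟨c₂, hc₂⟩ : ∃ c, C c = g.coeff 1 := natDegree_eq_zero.1 <| by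
    by_contra hne
    have := le_totalDegree (j := (g.coeff 1).natDegree) (k := 1) (by
      rw [coeff_natDegree, leadingCoeff_ne_zero]; rintro h; simp [h] at hne)
    lia
  obtain ⟨c₁, c₀, hc⟩ := exists_eq_X_add_C_of_natDegree_le_one (p := g.coeff 0) <| by
    by_contra hne
    have := le_totalDegree (j := (g.coeff 0).natDegree) (k := 0) (by
      rw [coeff_natDegree, leadingCoeff_ne_zero]; rintro h; simp [h] at hne)
    lia
  refine ⟨c₀, c₁, c₂, ?_, fun a b => ?_⟩
  · rintro rfl
    rw [C_0, eq_comm, ← hb, coeff_natDegree, leadingCoeff_eq_zero] at hc₂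
    simp [hc₂] at hb
  · have hlinear : g = C (g.coeff 1) * X + C (g.coeff 0) :=
      eq_X_add_C_of_natDegree_le_one hb.le
    rw [hlinear, ← hc₂, hc]
    simp only [evalEval, eval_add, eval_mul, eval_C, eval_X]
    ring

open Classical in
lemma card_isRoot_affine_le (hs : Function.Injective s) (hι : 2 ≤ Fintype.card ι)
    (hmult : ∀ p, 3 * (linesThrough s t p).card ≤ 2 * Fintype.card ι)
    (c₀ c₁ : K) {c₂ : K} (hc₂ : c₂ ≠ 0) :
    3 * ({i | c₀ + c₁ * t i + c₂ * s i = 0} : Finset ι).card ≤ 2 * Fintype.card ι := by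
  by_cases hc₁ : c₁ = 0
  · have : ({i | c₀ + c₁ * t i + c₂ * s i = 0} : Finset ι).card ≤ 1 := by
      refine Finset.card_le_one.2 fun i hi j hj => hs (mul_left_cancel₀ hc₂ ?_)
      simp only [Finset.mem_filter, hc₁, zero_mul, add_zero] at hi hj
      linear_combination hi.2 - hj.2
    lia
  · convert hmult (c₂ / c₁, -c₀ / c₁) using 3
    ext i
    rw [mem_linesThrough, Finset.mem_filter_univ]
    field_simp
    constructor <;> intro h <;> linear_combination h

lemma sum_weightedOrder_le_of_natDegree_eq_one (hs : Function.Injective s)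
    (hι : 2 ≤ Fintype.card ι) (hmult : ∀ p, 3 * (linesThrough s t p).card ≤ 2 * Fintype.card ι)
    {g : K[X][X]} (hg : Irreducible g) (hb : g.natDegree = 1) :
    ∑ i, weightedOrder (Fintype.card ι) 3 (recenter (t i) (s i) g) ≤
      Fintype.card ι * (totalDegree g + g.natDegree) := by
  classical
  have hsum : ∑ i, weightedOrder (Fintype.card ι) 3 (recenter (t i) (s i) g) ≤
      3 * ({i | g.evalEval (t i) (s i) = 0} : Finset ι).card := by
    rw [mul_comm, ← smul_eq_mul, ← Finset.sum_const, Finset.sum_filter]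
    refine Finset.sum_le_sum fun i _ => ?_
    split_ifs with h
    · exact weightedOrder_recenter_le_of_natDegree_eq_one hg hb _ _
    · exact (weightedOrder_recenter_eq_zero h).le
  by_cases hD : 2 ≤ totalDegree g
  · calc _ ≤ 3 * ({i | g.evalEval (t i) (s i) = 0} : Finset ι).card := hsum
      _ ≤ Fintype.card ι * 3 := by rw [mul_comm]; gcongr; exact Finset.card_le_univ _
      _ ≤ _ := by gcongr; lia
  · obtain ⟨c₀, c₁, c₂, hc₂, heval⟩ := exists_affine_of_totalDegree_le_one hb (by lia)
    have hD₁ : 1 ≤ totalDegree g := by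
      obtain ⟨j, hj⟩ : ∃ j, (g.coeff 1).coeff j ≠ 0 := by
        by_contra! h
        have hlead : g.leadingCoeff = 0 := by rw [leadingCoeff, hb]; ext j; simp [h]
        exact hg.ne_zero (leadingCoeff_eq_zero.1 hlead)
      have := le_totalDegree hj
      lia
    calc _ ≤ 3 * ({i | g.evalEval (t i) (s i) = 0} : Finset ι).card := hsum
      _ ≤ Fintype.card ι * 2 := by
        simp only [heval]
        rw [mul_comm (Fintype.card ι)]
        exact card_isRoot_affine_le hs hι hmult c₀ c₁ hc₂
      _ ≤ _ := by gcongr; lia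

theorem sum_weightedOrder_le [CharZero K] (hs : Function.Injective s) (ht : Function.Injective t)
    (hι : 2 ≤ Fintype.card ι) (hmult : ∀ p, 3 * (linesThrough s t p).card ≤ 2 * Fintype.card ι)
    {f : K[X][X]} (hf : f ≠ 0) :
    ∑ i, weightedOrder (Fintype.card ι) 3 (recenter (t i) (s i) f) ≤
      Fintype.card ι * (totalDegree f + f.natDegree) := by
  have hinj (i : ι) := recenter_injective (t i) (s i)
  induction f using WfDvdMonoid.induction_on_irreducible with
  | zero => exact absurd rfl hf
  | unit u hu =>
    exact sum_weightedOrder_le_of_natDegree_eq_zero ht hf (natDegree_eq_zero_of_isUnit hu)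
  | mul f g hf₀ hg ih =>
    have hirr : ∑ i, weightedOrder (Fintype.card ι) 3 (recenter (t i) (s i) g) ≤
        Fintype.card ι * (totalDegree g + g.natDegree) := by
      rcases lt_trichotomy g.natDegree 1 with h | h | h
      · exact sum_weightedOrder_le_of_natDegree_eq_zero ht hg.ne_zero (by lia)
      · exact sum_weightedOrder_le_of_natDegree_eq_one hs hι hmult hg h
      · exact sum_weightedOrder_le_of_two_le_natDegree ht hg h
    simp only [map_mul, weightedOrder_mul _ _ ((map_ne_zero_iff _ (hinj _)).2 hg.ne_zero)
      ((map_ne_zero_iff _ (hinj _)).2 hf₀), totalDegree_mul hg.ne_zero hf₀,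
      natDegree_mul hg.ne_zero hf₀, Finset.sum_add_distrib]
    linarith [ih hf₀]

end SlopeInequality

section DegreeLT

variable {R : Type*} [CommRing R]

lemma mem_degreeLT_iff_coeff_eq_zero {P : R[X]} {a : ℕ} :
    P ∈ degreeLT R a ↔ ∀ e, a ≤ e → P.coeff e = 0 := by
  rw [mem_degreeLT, degree_lt_iff_coeff_zero]

lemma mul_mem_degreeLT {P Q : R[X]} {a l : ℕ} (hP : P ∈ degreeLT R a) (hQ : Q.natDegree ≤ l) :
    P * Q ∈ degreeLT R (a + l) := by
  rw [mem_degreeLT_iff_coeff_eq_zero] at *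
  intro e he
  rw [coeff_mul]
  refine Finset.sum_eq_zero fun x hx => ?_
  rw [Finset.HasAntidiagonal.mem_antidiagonal] at hx
  rcases le_or_gt a x.1 with h | h
  · rw [hP _ h, zero_mul]
  · rw [coeff_eq_zero_of_natDegree_lt (p := Q) (by lia), mul_zero]

lemma mem_degreeLT_sub_of_mul [IsDomain R] {P Q : R[X]} {a : ℕ} (hP : P ≠ 0)
    (h : P * Q ∈ degreeLT R a) : Q ∈ degreeLT R (a - P.natDegree) := by
  rcases eq_or_ne Q 0 with rfl | hQ
  · exact zero_mem _
  · rw [mem_degreeLT, ← natDegree_lt_iff_degree_lt (mul_ne_zero hP hQ),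
      natDegree_mul hP hQ] at h
    rw [mem_degreeLT, ← natDegree_lt_iff_degree_lt hQ]
    lia

lemma eval_mem_degreeLT {p : R[X][X]} {w : R[X]} {a k : ℕ} (h : ∀ l, p.coeff l ∈ degreeLT R a)
    (hk : p.natDegree ≤ k) (hw : w.natDegree ≤ 1) : p.eval w ∈ degreeLT R (a + k) := by
  rw [eval_eq_sum_range]
  refine Submodule.sum_mem _ fun l hl => degreeLT_mono ?_
    (mul_mem_degreeLT (h l) ((natDegree_pow_le_of_le l hw).trans_eq (mul_one l)))
  have := Finset.mem_range.1 hl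
  lia

lemma coeff_mem_degreeLT_of_eval [IsDomain R] [Infinite R] {p : R[X][X]} {a : ℕ}
    (h : ∀ y, p.eval (C y) ∈ degreeLT R a) (l : ℕ) : p.coeff l ∈ degreeLT R a := by
  rw [mem_degreeLT_iff_coeff_eq_zero]
  intro e he
  have hzero : ∑ l ∈ p.support, monomial l ((p.coeff l).coeff e) = 0 := by
    refine Polynomial.funext fun y => ?_
    rw [eval_finsetSum, eval_zero, ← mem_degreeLT_iff_coeff_eq_zero.1 (h y) e he, eval_eq_sum,
      sum_def, finsetSum_coeff]
    refine Finset.sum_congr rfl fun l _ => ?_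
    rw [eval_monomial, ← C_pow, coeff_mul_C]
  have hcoeff := congrArg (fun q : R[X] => q.coeff l) hzero
  simp only [finsetSum_coeff, coeff_monomial, coeff_zero, Finset.sum_ite_eq'] at hcoeff
  by_cases hl : p.coeff l = 0
  · rw [hl, coeff_zero]
  · rwa [if_pos (mem_support_iff.2 hl)] at hcoeff

end DegreeLT

section Radial

variable {R : Type*} [CommRing R]

/-- The substitution `X ↦ w * T`, `Y ↦ T` from `R[X][Y]` to `R[T]`, the restriction of a polynomial
to the line of slope `w` through the origin. -/
noncomputable def radial (w : R) : R[X][X] →+* R[X] :=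
  eval₂RingHom (compRingHom (C w * X)) X

lemma radial_coeff (w : R) (G : R[X][X]) (d : ℕ) :
    (radial w G).coeff d =
      ∑ k ∈ Finset.range (d + 1), (G.coeff k).coeff (d - k) * w ^ (d - k) := by
  induction G using Polynomial.induction_on' with
  | add f g hf hg => simp only [map_add, coeff_add, hf, hg, add_mul, Finset.sum_add_distrib]
  | monomial m P =>
    rw [Finset.sum_congr rfl fun k _ => show ((monomial m P).coeff k).coeff (d - k) * w ^ (d - k) =
      if m = k then P.coeff (d - k) * w ^ (d - k) else 0 by rw [coeff_monomial]; split_ifs <;> simp]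
    rw [radial, coe_eval₂RingHom, eval₂_monomial, coe_compRingHom_apply, coeff_mul_X_pow',
      comp_C_mul_X_coeff, Finset.sum_ite_eq]
    simp only [Finset.mem_range, Nat.lt_succ_iff]

end Radial

section LineRestriction

variable {K : Type*} [Field K]

/-- The restriction `F(X, s * X + t, s)` of a polynomial `F(u, v, s)`, where the point `(u, v)` of
the affine plane together with the slope `s` stands for a flag, to the flags of the line
`v = s * u + t`. -/
noncomputable def restrictLine (s t : K) : K[X][X][X] →ₐ[K[X]] K[X] :=
  (aeval (C s * X + C t)).comp ((aeval (C (C s))).restrictScalars K[X])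

/-- The expansion of `F(u, v, s)` along the flags of the line `v = s * u + t`, whose coefficients
are polynomials in `u`. -/
noncomputable def recenterLine (s t : K) : K[X][X][X] →ₐ[K[X]] K[X][X][X] :=
  recenter (C s * X + C t) (C s)

/-- The polynomials `F(u, v, s)` whose restriction to the flags of every line has degree less
than `a`. -/
noncomputable def lineDegreeLT (K : Type*) [Field K] (a : ℕ) : Submodule K K[X][X][X] :=
  ⨅ (s : K) (t : K), (degreeLT K a).comap ((restrictLine s t).restrictScalars K).toLinearMap

lemma mem_lineDegreeLT {a : ℕ} {F : K[X][X][X]} :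
    F ∈ lineDegreeLT K a ↔ ∀ s t, restrictLine s t F ∈ degreeLT K a := by
  simp [lineDegreeLT]

lemma recenterLine_zero_zero (F : K[X][X][X]) : recenterLine 0 0 F = F := by
  ext k : 1
  simp [recenterLine, recenter_coeff]

lemma eval_radial_recenterLine (s t σ y : K) (F : K[X][X][X]) :
    (radial (X + C y) (recenterLine s t F)).eval (C σ) =
      restrictLine (s + σ) (t + σ * y) F := by
  have : ((evalRingHom (C σ)).comp ((radial (X + C y)).comp (recenterLine s t : _ →+* _))) =
      (restrictLine (s + σ) (t + σ * y) : K[X][X][X] →+* K[X]) := by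
    apply ringHom_ext'
    · apply ringHom_ext'
      · refine RingHom.ext fun P => ?_
        have hrecenter : recenterLine s t (C (C P)) = C (C P) := (recenterLine s t).commutes P
        have hrestrict : restrictLine (s + σ) (t + σ * y) (C (C P)) = P :=
          (restrictLine _ _).commutes P
        simp [radial, hrecenter, hrestrict]
      · simp [radial, recenterLine, recenter, restrictLine]; ring
    · simp [radial, recenterLine, recenter, restrictLine]; ring
  exact congrArg (fun φ => φ F) this

lemma exists_coeff_recenterLine_eq_eval [Infinite K] {a j k : ℕ} {F : K[X][X][X]}
    (hF : F ∈ lineDegreeLT K a) {s t : K}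
    (h₀ : ∀ j' k', j' + k' = j + k → j' < j → ((recenterLine s t F).coeff k').coeff j' = 0) :
    ∃ Q : K[X][X], Q.natDegree ≤ k ∧ (∀ l, Q.coeff l ∈ degreeLT K (a - j)) ∧
      ((recenterLine s t F).coeff k).coeff j = Q.eval (-X) := by
  set G := recenterLine s t F
  let Q : K[X][X] := ∑ i ∈ Finset.range (k + 1),
    C ((G.coeff i).coeff (j + k - i)) * (X + C X) ^ (k - i)
  have hQ (y : K) : (radial (X + C y) G).coeff (j + k) = (X + C y) ^ j * Q.eval (C y) := by
    rw [radial_coeff, eval_finsetSum, Finset.mul_sum]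
    symm
    refine Finset.sum_subset_zero_on_sdiff (Finset.range_mono (by lia)) (fun i hi => ?_)
      fun i hi => ?_
    · simp only [Finset.mem_sdiff, Finset.mem_range] at hi
      rw [h₀ _ _ (by lia) (by lia), zero_mul]
    · rw [Finset.mem_range] at hi
      rw [show j + k - i = j + (k - i) by lia, pow_add]
      simp only [eval_mul, eval_C, eval_pow, eval_add, eval_X]
      ring
  refine ⟨Q, ?_, fun l => coeff_mem_degreeLT_of_eval (fun y => ?_) l, ?_⟩
  · refine natDegree_sum_le_of_forall_le _ _ fun i _ => (natDegree_C_mul_le _ _).trans ?_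
    rw [natDegree_pow, natDegree_X_add_C]
    lia
  · have hmem : (radial (X + C y) G).coeff (j + k) ∈ degreeLT K a :=
      coeff_mem_degreeLT_of_eval (fun σ => by
        rw [eval_radial_recenterLine]; exact mem_lineDegreeLT.1 hF _ _) _
    rw [hQ] at hmem
    simpa using mem_degreeLT_sub_of_mul (pow_ne_zero j (X_add_C_ne_zero y)) hmem
  · rw [eval_finsetSum, Finset.sum_range_succ, Finset.sum_eq_zero, zero_add]
    · simp
    · intro i hi
      have := Finset.mem_range.1 hi
      simp [zero_pow (show k - i ≠ 0 by lia)]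

lemma coeff_recenterLine_mem_degreeLT [Infinite K] {a j k : ℕ} {F : K[X][X][X]}
    (hF : F ∈ lineDegreeLT K a) {s t : K}
    (h₀ : ∀ j' k', j' + k' = j + k → j' < j → ((recenterLine s t F).coeff k').coeff j' = 0) :
    ((recenterLine s t F).coeff k).coeff j ∈ degreeLT K (a - j + k) := by
  obtain ⟨Q, hdeg, hcoeff, heq⟩ := exists_coeff_recenterLine_eq_eval hF h₀
  rw [heq]
  exact eval_mem_degreeLT hcoeff hdeg (by simp)

lemma coeff_recenterLine_eq_zero [Infinite K] {a j k : ℕ} {F : K[X][X][X]}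
    (hF : F ∈ lineDegreeLT K a) (ha : a ≤ j) {s t : K}
    (h₀ : ∀ j' k', j' + k' = j + k → j' < j → ((recenterLine s t F).coeff k').coeff j' = 0) :
    ((recenterLine s t F).coeff k).coeff j = 0 := by
  obtain ⟨Q, -, hcoeff, heq⟩ := exists_coeff_recenterLine_eq_eval hF h₀
  have hQ : Q = 0 := by
    ext l : 1
    simpa [mem_degreeLT, Nat.sub_eq_zero_of_le ha] using hcoeff l
  rw [heq, hQ, eval_zero]

lemma coeff_eq_zero_of_mem_lineDegreeLT [Infinite K] {a n j k : ℕ} {F : K[X][X][X]}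
    (hF : F ∈ lineDegreeLT K a) (hn : F.natDegree ≤ n) (h : a + n ≤ j + k) :
    (F.coeff k).coeff j = 0 := by
  induction j using Nat.strong_induction_on generalizing k with
  | _ j ih =>
    by_cases hk : n < k
    · rw [coeff_eq_zero_of_natDegree_lt (hn.trans_lt hk), coeff_zero]
    · rw [← recenterLine_zero_zero F]
      refine coeff_recenterLine_eq_zero hF (by lia) fun j' k' hsum hlt => ?_
      rw [recenterLine_zero_zero]
      exact ih j' hlt (by lia)

lemma lineDegreeLT_zero [Infinite K] : lineDegreeLT K 0 = ⊥ := by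
  refine (Submodule.eq_bot_iff _).2 fun F hF => ?_
  ext k j : 2
  rw [coeff_zero, coeff_zero]
  induction j using Nat.strong_induction_on generalizing k with
  | _ j ih =>
    rw [← recenterLine_zero_zero F]
    refine coeff_recenterLine_eq_zero hF j.zero_le fun j' k' _ hlt => ?_
    rw [recenterLine_zero_zero]
    exact ih j' hlt k'

end LineRestriction

section SuccessiveConditions

open Module

variable {K E E' : Type*} [Field K] [AddCommGroup E] [Module K E] [AddCommGroup E'] [Module K E']

lemma finiteDimensional_of_map_le {V V' : Submodule K E} {φ : E →ₗ[K] E'} {T : Submodule K E'}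
    [FiniteDimensional K V'] [FiniteDimensional K T] (hT : V.map φ ≤ T)
    (hV' : V ⊓ LinearMap.ker φ ≤ V') : FiniteDimensional K V := by
  have := Submodule.finiteDimensional_of_le hT
  have := Submodule.finiteDimensional_of_le hV'
  exact Module.Finite.iff_fg.2
    (Submodule.fg_of_fg_map_of_fg_inf_ker φ Submodule.FG.of_finite Submodule.FG.of_finite)

lemma finrank_map_add_finrank_inf_ker (V : Submodule K E) [FiniteDimensional K V]
    (φ : E →ₗ[K] E') :
    finrank K (V.map φ) + finrank K ↥(V ⊓ LinearMap.ker φ) = finrank K V := by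
  rw [← LinearMap.finrank_range_add_finrank_ker (φ.domRestrict V), LinearMap.range_domRestrict,
    LinearMap.ker_domRestrict, ← Submodule.map_comap_subtype, Submodule.finrank_map_subtype_eq]

lemma finrank_le_add_of_map_le {V V' : Submodule K E} {φ : E →ₗ[K] E'} {T : Submodule K E'}
    [FiniteDimensional K V'] [FiniteDimensional K T] (hT : V.map φ ≤ T)
    (hV' : V ⊓ LinearMap.ker φ ≤ V') : finrank K V ≤ finrank K V' + finrank K T := by
  have := finiteDimensional_of_map_le hT hV'
  rw [← finrank_map_add_finrank_inf_ker V φ, add_comm]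
  exact add_le_add (Submodule.finrank_mono hV') (Submodule.finrank_mono hT)

lemma finrank_le_add_sum_of_successive_conditions {κ : Type*} (V : Submodule K E)
    [FiniteDimensional K V] (r : κ → ℕ) (φ : κ → E →ₗ[K] E') (T : κ → Submodule K E')
    [∀ c, FiniteDimensional K (T c)] (S : Finset κ)
    (h : ∀ x ∈ V, ∀ c ∈ S, (∀ c' ∈ S, r c' < r c → φ c' x = 0) → φ c x ∈ T c) :
    finrank K V ≤ finrank K ↥(V ⊓ ⨅ c ∈ S, LinearMap.ker (φ c)) + ∑ c ∈ S, finrank K (T c) := by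
  classical
  induction S using Finset.induction_on_max_value r with
  | empty => exact (Submodule.finrank_mono (by simp)).trans (Nat.le_add_right _ _)
  | insert a S ha hmax ih =>
    have hS := ih fun x hx c hc hlt => h x hx c (Finset.mem_insert_of_mem hc) fun c' hc' hr => by
      rcases Finset.mem_insert.1 hc' with rfl | hc'
      · exact absurd (hmax c hc) (by lia)
      · exact hlt c' hc' hr
    have ha' : finrank K ↥(V ⊓ ⨅ c ∈ S, LinearMap.ker (φ c)) ≤
        finrank K ↥(V ⊓ ⨅ c ∈ insert a S, LinearMap.ker (φ c)) + finrank K (T a) := by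
      refine finrank_le_add_of_map_le (φ := φ a) ?_ ?_
      · rintro _ ⟨x, hx, rfl⟩
        simp only [SetLike.mem_coe, Submodule.mem_inf, Submodule.mem_iInf,
          LinearMap.mem_ker] at hx
        refine h x hx.1 a (Finset.mem_insert_self a S) fun c' hc' hr => ?_
        exact hx.2 c' (Finset.mem_of_mem_insert_of_ne hc' (by rintro rfl; lia))
      · rw [Finset.iInf_insert, inf_comm (LinearMap.ker (φ a)), inf_assoc]
    rw [Finset.sum_insert ha]
    lia

end SuccessiveConditions

section FlagSpace

/-- The coefficient of `X ^ j * Y ^ k` as a linear form on `R[X][Y]`. -/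
noncomputable def bicoeff (R : Type*) [CommRing R] (j k : ℕ) : R[X][X] →ₗ[R] R :=
  lcoeff R j ∘ₗ (lcoeff R[X] k).restrictScalars R

lemma bicoeff_apply {R : Type*} [CommRing R] (j k : ℕ) (f : R[X][X]) :
    bicoeff R j k f = (f.coeff k).coeff j := rfl

variable {K : Type*} [Field K]

/-- The restriction of `F(u, v, s)` to `u = 0`. -/
noncomputable def restrictZero : K[X][X][X] →ₐ[K] K[X][X] :=
  mapAlgHom (mapAlgHom (aeval 0))

lemma restrictZero_coeff (F : K[X][X][X]) (j k : ℕ) :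
    ((restrictZero F).coeff k).coeff j = ((F.coeff k).coeff j).coeff 0 := by
  simp [restrictZero, coeff_zero_eq_eval_zero]

/-- The space of polynomials `F(u, v, s)` of degree at most `n` in `s` whose restriction to the
flags of every line has degree less than `a`. -/
noncomputable def flagSpace (K : Type*) [Field K] (n a : ℕ) : Submodule K K[X][X][X] :=
  (degreeLE K[X][X] n).restrictScalars K ⊓ lineDegreeLT K a

lemma mem_flagSpace {n a : ℕ} {F : K[X][X][X]} :
    F ∈ flagSpace K n a ↔ F.natDegree ≤ n ∧ F ∈ lineDegreeLT K a := by
  rw [flagSpace, Submodule.mem_inf, Submodule.restrictScalars_mem, mem_degreeLE,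
    natDegree_le_iff_degree_le]

lemma flagSpace_zero [Infinite K] (n : ℕ) : flagSpace K n 0 = ⊥ := by
  rw [flagSpace, lineDegreeLT_zero, inf_bot_eq]

lemma C_C_X_dvd_of_restrictZero_eq_zero {F : K[X][X][X]} (h : restrictZero F = 0) :
    C (C X) ∣ F := by
  simp only [C_dvd_iff_dvd_coeff, X_dvd_iff, ← restrictZero_coeff, h, coeff_zero, implies_true]

lemma X_mul_mem_degreeLT_succ {P : K[X]} {a : ℕ} :
    X * P ∈ degreeLT K (a + 1) ↔ P ∈ degreeLT K a := by
  refine ⟨fun h => by simpa using mem_degreeLT_sub_of_mul X_ne_zero h, fun h => ?_⟩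
  rw [mul_comm]
  exact mul_mem_degreeLT h natDegree_X_le

lemma C_C_X_mul_mem_flagSpace_succ {n a : ℕ} {G : K[X][X][X]} :
    C (C X) * G ∈ flagSpace K n (a + 1) ↔ G ∈ flagSpace K n a := by
  have hcomm (s t : K) : restrictLine s t (C (C X)) = X := (restrictLine s t).commutes X
  simp only [mem_flagSpace, mem_lineDegreeLT, map_mul, hcomm, X_mul_mem_degreeLT_succ]
  rw [natDegree_C_mul (by simp)]

lemma coeff_restrictZero_eq_zero [Infinite K] {n a j k : ℕ} {F : K[X][X][X]}
    (hF : F ∈ flagSpace K n a) (h : n < k ∨ a + n ≤ j + k) :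
    ((restrictZero F).coeff k).coeff j = 0 := by
  obtain ⟨hdeg, hline⟩ := mem_flagSpace.1 hF
  rw [restrictZero_coeff]
  rcases h with h | h
  · simp [coeff_eq_zero_of_natDegree_lt (hdeg.trans_lt h)]
  · simp [coeff_eq_zero_of_mem_lineDegreeLT hline hdeg h]

instance finiteDimensional_flagSpace [Infinite K] (n a : ℕ) :
    FiniteDimensional K (flagSpace K n a) := by
  induction a with
  | zero => rw [flagSpace_zero]; infer_instance
  | succ a ih =>
    let φ : K[X][X][X] →ₗ[K] (Fin (n + 1) × Fin (a + 1 + n) → K) :=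
      LinearMap.pi fun x => bicoeff K x.2 x.1 ∘ₗ restrictZero.toLinearMap
    have hker : flagSpace K n (a + 1) ⊓ LinearMap.ker φ ≤
        (flagSpace K n a).map (LinearMap.mulLeft K (C (C X))) := by
      rintro F ⟨hF, hφ⟩
      have hzero : restrictZero F = 0 := by
        ext k j
        by_cases h : n < k ∨ a + 1 + n ≤ j + k
        · exact coeff_restrictZero_eq_zero hF h
        · exact congrFun (LinearMap.mem_ker.1 hφ) (⟨k, by lia⟩, ⟨j, by lia⟩)
      obtain ⟨G, rfl⟩ := C_C_X_dvd_of_restrictZero_eq_zero hzero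
      exact ⟨G, C_C_X_mul_mem_flagSpace_succ.1 hF, rfl⟩
    exact finiteDimensional_of_map_le le_top hker

/-- A polynomial of `flagSpace K n (a + 1)`, for `k ≤ n` and `j + k ≤ a + n`, whose restriction to
`u = 0` is the monomial `v ^ j * s ^ k`. -/
noncomputable def flagMonomial (K : Type*) [Field K] (a j k : ℕ) : K[X][X][X] :=
  C X ^ min j a * (C X - C (C X) * X) ^ (j - a) * X ^ k

lemma restrictZero_flagMonomial (a j k : ℕ) :
    restrictZero (flagMonomial K a j k) = C (X ^ j) * X ^ k := by
  simp only [flagMonomial, restrictZero, map_mul, map_pow, map_sub, coe_mapAlgHom, map_X, map_C,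
    aeval_X, map_zero, zero_mul, sub_zero, RingHom.coe_coe]
  rw [← pow_add]
  congr 2; omega

lemma flagMonomial_mem_flagSpace {n a j k : ℕ} (hk : k ≤ n) (hjk : j + k ≤ a + n) :
    flagMonomial K a j k ∈ flagSpace K n (a + 1) := by
  refine mem_flagSpace.2 ⟨?_, mem_lineDegreeLT.2 fun s t => ?_⟩
  · have hlinear : (C X - C (C X) * X : K[X][X][X]).natDegree ≤ 1 := by compute_degree
    have hpow := natDegree_pow_le_of_le (j - a) hlinear
    rw [flagMonomial, ← C_pow, mul_assoc]
    refine (natDegree_C_mul_le _ _).trans (natDegree_mul_le.trans ?_)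
    rw [natDegree_X_pow]
    lia
  · have hrestrict : restrictLine s t (flagMonomial K a j k) =
        C (t ^ (j - a) * s ^ k) * (C s * X + C t) ^ min j a := by
      simp [flagMonomial, restrictLine]
      ring
    have hpow := natDegree_pow_le_of_le (min j a) (natDegree_linear_le (a := s) (b := t))
    rw [hrestrict, mem_degreeLT_iff_coeff_eq_zero]
    intro e he
    rw [coeff_C_mul, coeff_eq_zero_of_natDegree_lt (by lia), mul_zero]

lemma add_finrank_flagSpace_le_finrank_flagSpace_succ [Infinite K] (n a : ℕ) :
    Module.finrank K (flagSpace K n a) + ∑ k ∈ Finset.range (n + 1), (a + n + 1 - k) ≤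
      Module.finrank K (flagSpace K n (a + 1)) := by
  let φ : K[X][X][X] →ₗ[K] ((Σ k : Fin (n + 1), Fin (a + n + 1 - k)) → K) :=
    LinearMap.pi fun x => bicoeff K x.2 x.1 ∘ₗ restrictZero.toLinearMap
  let mulU := LinearMap.mulLeft K (C (C X) : K[X][X][X])
  have hmap : (flagSpace K n (a + 1)).map φ = ⊤ := by
    rw [← top_le_iff, ← (Pi.basisFun K _).span_eq, Submodule.span_le]
    rintro _ ⟨⟨k, j⟩, rfl⟩
    refine ⟨flagMonomial K a j k, flagMonomial_mem_flagSpace (by lia) (by lia), ?_⟩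
    ext ⟨k', j'⟩
    simp only [φ, LinearMap.pi_apply, LinearMap.comp_apply, AlgHom.toLinearMap_apply,
      restrictZero_flagMonomial, bicoeff_apply, coeff_C_mul_X_pow, Pi.basisFun_apply]
    by_cases hk : k' = k
    · subst hk
      simp [coeff_X_pow, Pi.single_apply, Fin.ext_iff]
    · have hval : (k' : ℕ) ≠ k := Fin.val_ne_of_ne hk
      simp [hk, hval]
  have hker : (flagSpace K n a).map mulU ≤ flagSpace K n (a + 1) ⊓ LinearMap.ker φ := by
    rintro _ ⟨G, hG, rfl⟩
    refine ⟨C_C_X_mul_mem_flagSpace_succ.2 hG, LinearMap.mem_ker.2 (funext fun x => ?_)⟩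
    simp [φ, mulU, bicoeff_apply, restrictZero_coeff, -map_mul]
  have hinj : Function.Injective mulU := mul_right_injective₀ (by simp)
  have hcard : Fintype.card (Σ k : Fin (n + 1), Fin (a + n + 1 - k)) =
      ∑ k ∈ Finset.range (n + 1), (a + n + 1 - k) := by
    rw [Fintype.card_sigma, Finset.sum_range]
    simp
  rw [← finrank_map_add_finrank_inf_ker (flagSpace K n (a + 1)) φ, hmap, finrank_top,
    Module.finrank_fintype_fun_eq_card, hcard, add_comm,
    (Submodule.equivMapOfInjective mulU hinj _).finrank_eq]
  exact Nat.add_le_add_left (Submodule.finrank_mono hker) _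

lemma sum_le_finrank_flagSpace [Infinite K] (n a : ℕ) :
    ∑ b ∈ Finset.range a, ∑ k ∈ Finset.range (n + 1), (b + n + 1 - k) ≤
      Module.finrank K (flagSpace K n a) := by
  induction a with
  | zero => simp
  | succ a ih =>
    rw [Finset.sum_range_succ]
    exact (Nat.add_le_add_right ih _).trans (add_finrank_flagSpace_le_finrank_flagSpace_succ n a)

end FlagSpace

section LineVanishing

variable {K : Type*} [Field K]

/-- The coefficient of order `j` in `v` and `k` in `s` of the expansion of `F(u, v, s)` along the
flags of the line `v = s * u + t`, as a linear map in `F`. -/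
noncomputable def lineCoeff (s t : K) (j k : ℕ) : K[X][X][X] →ₗ[K] K[X] :=
  (bicoeff K[X] j k).restrictScalars K ∘ₗ ((recenterLine s t).restrictScalars K).toLinearMap

lemma lineCoeff_apply (s t : K) (j k : ℕ) (F : K[X][X][X]) :
    lineCoeff s t j k F = ((recenterLine s t F).coeff k).coeff j := rfl

lemma lineCoeff_C_C_mul (s t : K) (j k : ℕ) (P : K[X]) (F : K[X][X][X]) :
    lineCoeff s t j k (C (C P) * F) = P * lineCoeff s t j k F := by
  have hcomm : recenterLine s t (C (C P)) = C (C P) := (recenterLine s t).commutes P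
  rw [lineCoeff_apply, map_mul, hcomm, coeff_C_mul, coeff_C_mul, lineCoeff_apply]

lemma restrictZero_recenterLine (s t : K) (F : K[X][X][X]) :
    restrictZero (recenterLine s t F) = recenter t s (restrictZero F) := by
  have hcomm : (restrictZero : K[X][X][X] →ₐ[K] _).toRingHom.comp
      (recenterLine s t : K[X][X][X] →+* K[X][X][X]) =
      (recenter t s : K[X][X] →+* K[X][X]).comp (restrictZero : K[X][X][X] →ₐ[K] _).toRingHom := by
    apply ringHom_ext'
    · apply ringHom_ext'
      · ext <;> simp [restrictZero, recenterLine, recenter]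
      · simp [restrictZero, recenterLine, recenter]
    · simp [restrictZero, recenterLine, recenter]
  exact RingHom.congr_fun hcomm F

/-- The indices `(j, k)` of the coefficients of weight `N * j + 3 * k` less than `3 * n`. -/
def lineConditions (N n : ℕ) : Finset (ℕ × ℕ) :=
  {x ∈ Finset.range (3 * n) ×ˢ Finset.range n | N * x.1 + 3 * x.2 < 3 * n}

lemma mem_lineConditions {N n : ℕ} (hN : N ≠ 0) {x : ℕ × ℕ} :
    x ∈ lineConditions N n ↔ N * x.1 + 3 * x.2 < 3 * n := by
  have := Nat.le_mul_of_pos_left x.1 (Nat.pos_of_ne_zero hN)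
  simp only [lineConditions, Finset.mem_filter, Finset.mem_product, Finset.mem_range,
    and_iff_right_iff_imp]
  lia

variable {ι : Type*} [Fintype ι] {s t : ι → K}

/-- The elements of `flagSpace K n a` vanishing to weighted order at least `3 * n`, for the weights
`N = Fintype.card ι` of `v` and `3` of `s`, along the flags of each line `v = s i * u + t i`. -/
noncomputable def lineVanishingSpace (s t : ι → K) (n a : ℕ) : Submodule K K[X][X][X] :=
  flagSpace K n a ⊓ ⨅ c ∈ Finset.univ ×ˢ lineConditions (Fintype.card ι) n,
    LinearMap.ker (lineCoeff (s c.1) (t c.1) c.2.1 c.2.2)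

lemma mem_lineVanishingSpace {n a : ℕ} {F : K[X][X][X]} :
    F ∈ lineVanishingSpace s t n a ↔ F ∈ flagSpace K n a ∧
      ∀ i j k, Fintype.card ι * j + 3 * k < 3 * n → lineCoeff (s i) (t i) j k F = 0 := by
  simp only [lineVanishingSpace, Submodule.mem_inf, Submodule.mem_iInf, LinearMap.mem_ker,
    Prod.forall, Finset.mem_product, Finset.mem_univ, true_and]
  refine and_congr_right fun _ => forall_congr' fun i => ?_
  have : Nonempty ι := ⟨i⟩
  simp only [mem_lineConditions Fintype.card_ne_zero]

lemma eq_zero_of_C_X_sub_C_pow_dvd [CharZero K] (hs : Function.Injective s)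
    (ht : Function.Injective t) (hι : 2 ≤ Fintype.card ι)
    (hmult : ∀ p, 3 * (linesThrough s t p).card ≤ 2 * Fintype.card ι)
    {n a : ℕ} {f : K[X][X]} (hdeg : f.natDegree ≤ n) (htotal : totalDegree f ≤ a + n)
    (horder : ∀ i, 3 * n ≤ weightedOrder (Fintype.card ι) 3 (recenter (t i) (s i) f))
    {v : K} (hv : ∀ i, t i ≠ v) (hdvd : C ((X - C v) ^ (a + 1 - n)) ∣ f) : f = 0 := by
  by_contra hf
  obtain ⟨g, hg⟩ := hdvd
  set P : K[X] := (X - C v) ^ (a + 1 - n)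
  have hP : C P ≠ 0 := left_ne_zero_of_mul (hg ▸ hf)
  have hg₀ : g ≠ 0 := right_ne_zero_of_mul (hg ▸ hf)
  have hPtotal : a + 1 - n ≤ totalDegree (C P) := by
    refine le_totalDegree (j := a + 1 - n) (k := 0) ?_
    have hmonic : P.Monic := (monic_X_sub_C v).pow _
    have hcoeff := hmonic.coeff_natDegree
    rw [natDegree_pow, natDegree_X_sub_C, mul_one] at hcoeff
    rw [coeff_C_zero, hcoeff]
    exact one_ne_zero
  have hgorder (i : ι) : 3 * n ≤ weightedOrder (Fintype.card ι) 3 (recenter (t i) (s i) g) := by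
    have hPorder : weightedOrder (Fintype.card ι) 3 (recenter (t i) (s i) (C P)) = 0 :=
      weightedOrder_recenter_eq_zero (by simp [P, evalEval, sub_eq_zero, hv i])
    have hinj := recenter_injective (t i) (s i)
    simpa only [hg, map_mul, weightedOrder_mul _ _ ((map_ne_zero_iff _ hinj).2 hP)
      ((map_ne_zero_iff _ hinj).2 hg₀), hPorder, zero_add] using horder i
  have hslope : Fintype.card ι * (3 * n) ≤ Fintype.card ι * (totalDegree g + g.natDegree) :=
    (Finset.card_nsmul_le_sum Finset.univ _ _ fun i _ => hgorder i).trans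
      (sum_weightedOrder_le hs ht hι hmult hg₀)
  have hslope' := Nat.le_of_mul_le_mul_left hslope (by lia)
  rw [hg, totalDegree_mul hP hg₀] at htotal
  rw [hg, natDegree_C_mul (C_ne_zero.1 hP)] at hdeg
  lia

lemma le_weightedOrder_recenter_restrictZero {n a : ℕ} {F : K[X][X][X]}
    (hF : F ∈ lineVanishingSpace s t n a) (hF₀ : restrictZero F ≠ 0) (i : ι) :
    3 * n ≤ weightedOrder (Fintype.card ι) 3 (recenter (t i) (s i) (restrictZero F)) := by
  refine le_weightedOrder ((map_ne_zero_iff _ (recenter_injective _ _)).2 hF₀) fun j k hjk => ?_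
  contrapose! hjk
  rw [← restrictZero_recenterLine, restrictZero_coeff, ← lineCoeff_apply,
    (mem_lineVanishingSpace.1 hF).2 i j k hjk, coeff_zero]

/-- The Taylor coefficients at `(0, v)` of `F(u, v, s)`: those of `v`-order less than `d` of the
coefficients of `s ^ k` with `k ≤ n`. -/
noncomputable def taylorAtZero (v : K) (n d : ℕ) :
    K[X][X][X] →ₗ[K] (Fin (n + 1) × Fin d → K) :=
  LinearMap.pi fun x =>
    bicoeff K x.2 x.1 ∘ₗ (recenter v 0).toLinearMap ∘ₗ restrictZero.toLinearMap

lemma restrictZero_eq_zero_of_taylorAtZero_eq_zero [CharZero K] (hs : Function.Injective s)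
    (ht : Function.Injective t) (hι : 2 ≤ Fintype.card ι)
    (hmult : ∀ p, 3 * (linesThrough s t p).card ≤ 2 * Fintype.card ι)
    {n a : ℕ} {F : K[X][X][X]} (hF : F ∈ lineVanishingSpace s t n (a + 1))
    {v : K} (hv : ∀ i, t i ≠ v) (hTaylor : taylorAtZero v n (a + 1 - n) F = 0) :
    restrictZero F = 0 := by
  by_contra hne
  have hflag := (mem_lineVanishingSpace.1 hF).1
  have hcoeff {k : ℕ} (hk : n < k) : (restrictZero F).coeff k = 0 := by
    ext j
    exact coeff_restrictZero_eq_zero hflag (Or.inl hk)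
  refine hne (eq_zero_of_C_X_sub_C_pow_dvd hs ht hι hmult (n := n) (a := a)
    (natDegree_le_iff_coeff_eq_zero.2 fun k hk => hcoeff hk) (totalDegree_le fun j k hjk => ?_)
    (le_weightedOrder_recenter_restrictZero hF hne) hv (C_dvd_iff_dvd_coeff _ _ |>.2 fun k => ?_))
  · contrapose! hjk
    exact coeff_restrictZero_eq_zero hflag (Or.inr (by lia))
  · by_cases hk : n < k
    · rw [hcoeff hk]
      exact dvd_zero _
    · refine X_sub_C_pow_dvd_iff.2 (X_pow_dvd_iff.2 fun j hj => ?_)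
      have := congrFun hTaylor (⟨k, by lia⟩, ⟨j, hj⟩)
      simpa [taylorAtZero, bicoeff_apply, recenter_coeff, taylor_apply] using this

lemma finrank_lineVanishingSpace_le [CharZero K] (hs : Function.Injective s)
    (ht : Function.Injective t) (hι : 2 ≤ Fintype.card ι)
    (hmult : ∀ p, 3 * (linesThrough s t p).card ≤ 2 * Fintype.card ι) (n a : ℕ) :
    Module.finrank K (lineVanishingSpace s t n a) ≤
      ∑ b ∈ Finset.range a, (n + 1) * (b + 1 - n) := by
  obtain ⟨v, hv⟩ := (Set.finite_range t).exists_notMem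
  rw [Set.mem_range, not_exists] at hv
  have hfin (a : ℕ) : FiniteDimensional K (lineVanishingSpace s t n a) :=
    Submodule.finiteDimensional_of_le inf_le_left
  induction a with
  | zero =>
    have hbot : lineVanishingSpace s t n 0 = ⊥ := by
      rw [lineVanishingSpace, flagSpace_zero, bot_inf_eq]
    simp [hbot]
  | succ a ih =>
    have hker : lineVanishingSpace s t n (a + 1) ⊓ LinearMap.ker (taylorAtZero v n (a + 1 - n)) ≤
        (lineVanishingSpace s t n a).map (LinearMap.mulLeft K (C (C X))) := by
      rintro F ⟨hF, hTaylor⟩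
      obtain ⟨G, rfl⟩ := C_C_X_dvd_of_restrictZero_eq_zero
        (restrictZero_eq_zero_of_taylorAtZero_eq_zero hs ht hι hmult hF hv hTaylor)
      obtain ⟨hflag, hvanish⟩ := mem_lineVanishingSpace.1 hF
      refine ⟨G, mem_lineVanishingSpace.2 ⟨C_C_X_mul_mem_flagSpace_succ.1 hflag,
        fun i j k hjk => ?_⟩, rfl⟩
      have := hvanish i j k hjk
      rwa [lineCoeff_C_C_mul, mul_eq_zero_iff_left X_ne_zero] at this
    have hrank := finrank_le_add_of_map_le le_top hker
    have hmap := Submodule.finrank_map_le (LinearMap.mulLeft K (C (C X) : K[X][X][X]))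
      (lineVanishingSpace s t n a)
    rw [finrank_top, Module.finrank_fintype_fun_eq_card, Fintype.card_prod, Fintype.card_fin,
      Fintype.card_fin] at hrank
    rw [Finset.sum_range_succ]
    lia

end LineVanishing

section PointVanishing

variable {K : Type*} [Field K]

/-- The Taylor coefficient of order `i` in `u` and `j` in `v` at the point `p` of the coefficient of
`s ^ k` in `F(u, v, s)`, as a linear form in `F`. -/
noncomputable def pointCoeff (p : K × K) (k i j : ℕ) : K[X][X][X] →ₗ[K] K :=
  bicoeff K i j ∘ₗ (recenter p.1 p.2).toLinearMap ∘ₗ (lcoeff K[X][X] k).restrictScalars K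

lemma pointCoeff_apply (p : K × K) (k i j : ℕ) (F : K[X][X][X]) :
    pointCoeff p k i j F = ((recenter p.1 p.2 (F.coeff k)).coeff j).coeff i := rfl

lemma pointCoeff_taylor_eq_zero {p : K × K} {i j : ℕ} {F : K[X][X][X]}
    (h : ∀ k, pointCoeff p k i j F = 0) (s : K) (k : ℕ) :
    pointCoeff p k i j (taylor (C (C s)) F) = 0 := by
  have hsum : (taylor (C (C s)) F).coeff k = ∑ l ∈ Finset.range ((hasseDeriv k F).natDegree + 1),
      (((l + k).choose k : K) * s ^ l) • F.coeff (l + k) := by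
    rw [taylor_coeff, eval_eq_sum_range]
    refine Finset.sum_congr rfl fun l _ => ?_
    rw [hasseDeriv_coeff, ← C_pow, ← C_pow, Algebra.smul_def, map_mul, map_natCast]
    exact mul_right_comm _ _ _
  change bicoeff K i j (recenter p.1 p.2 ((taylor (C (C s)) F).coeff k)) = 0
  rw [hsum, map_sum, map_sum]
  refine Finset.sum_eq_zero fun l _ => ?_
  rw [map_smul, map_smul]
  exact smul_eq_zero_of_right _ (h (l + k))

lemma X_sub_C_pow_dvd_coeff_taylor {G : K[X][X]} {d : ℕ} {u v s t : K} (hv : s * u + t = v)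
    (h : ∀ i j, i + j < d → ((recenter u v G).coeff j).coeff i = 0) (j : ℕ) :
    (X - C u) ^ (d - j) ∣ (taylor (C s * X + C t) G).coeff j := by
  have hdvd (l : ℕ) : (X - C u) ^ (d - l) ∣ (taylor (C v) G).coeff l := by
    refine X_sub_C_pow_dvd_iff.2 (X_pow_dvd_iff.2 fun i hi => ?_)
    simpa [recenter_coeff, taylor_apply] using h i l (by lia)
  have hshift : C s * X + C t = C s * (X - C u) + C v := by
    rw [← hv, C_add, C_mul]
    ring
  rw [hshift, ← taylor_taylor, taylor_coeff, eval_eq_sum_range]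
  refine Finset.dvd_sum fun l _ => ?_
  have hpow : (X - C u) ^ (d - j) ∣ (X - C u) ^ (d - (l + j)) * (X - C u) ^ l := by
    rw [← pow_add]
    exact pow_dvd_pow _ (by lia)
  rw [hasseDeriv_coeff, mul_pow]
  exact hpow.trans (mul_dvd_mul ((hdvd _).mul_left _) (dvd_mul_left _ _))

lemma X_sub_C_pow_dvd_lineCoeff {p : K × K} {d : ℕ} {F : K[X][X][X]}
    (h : ∀ k i j, i + j < d → pointCoeff p k i j F = 0) {s t : K} (hp : s * p.1 + t = p.2)
    (j k : ℕ) : (X - C p.1) ^ (d - j) ∣ lineCoeff s t j k F := by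
  rw [lineCoeff_apply, recenterLine, recenter_coeff]
  exact X_sub_C_pow_dvd_coeff_taylor hp
    (fun i j hij => pointCoeff_taylor_eq_zero (fun k => h k i j hij) s k) j

/-- The coefficients `(k, i, j)` of `pointCoeff p` with `k ≤ n` and `i + j < κ p`, for the points
`p` of `P`, encoded as `⟨p, k, ⟨j, i⟩⟩`. -/
def pointConditions (P : Finset (K × K)) (κ : K × K → ℕ) (n : ℕ) :
    Finset (Σ _ : K × K, ℕ × Σ _ : ℕ, ℕ) :=
  P.sigma fun p => Finset.range (n + 1) ×ˢ (Finset.range (κ p)).sigma fun j =>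
    Finset.range (κ p - j)

/-- The elements of `flagSpace K n a` all of whose coefficients in `s` vanish to order at least
`κ p` at each point `p` of `P`. -/
noncomputable def pointVanishingSpace (P : Finset (K × K)) (κ : K × K → ℕ) (n a : ℕ) :
    Submodule K K[X][X][X] :=
  flagSpace K n a ⊓ ⨅ c ∈ pointConditions P κ n,
    LinearMap.ker (pointCoeff c.1 c.2.1 c.2.2.2 c.2.2.1)

lemma pointCoeff_eq_zero_of_mem {P : Finset (K × K)} {κ : K × K → ℕ} {n a : ℕ} {F : K[X][X][X]}
    (hF : F ∈ pointVanishingSpace P κ n a) {p : K × K} (hp : p ∈ P) {i j : ℕ} (hij : i + j < κ p)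
    (k : ℕ) : pointCoeff p k i j F = 0 := by
  obtain ⟨hflag, hvanish⟩ := hF
  by_cases hk : k ≤ n
  · simp only [SetLike.mem_coe, Submodule.mem_iInf, LinearMap.mem_ker] at hvanish
    refine hvanish ⟨p, k, j, i⟩ ?_
    simp only [pointConditions, Finset.mem_sigma, Finset.mem_product, Finset.mem_range]
    exact ⟨hp, by lia, by lia, by lia⟩
  · rw [pointCoeff_apply, coeff_eq_zero_of_natDegree_lt ((mem_flagSpace.1 hflag).1.trans_lt
      (by lia)), map_zero, coeff_zero, coeff_zero]

lemma finrank_flagSpace_le_pointVanishingSpace [Infinite K] (P : Finset (K × K)) (κ : K × K → ℕ)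
    (n a : ℕ) :
    Module.finrank K (flagSpace K n a) ≤ Module.finrank K (pointVanishingSpace P κ n a) +
      ∑ p ∈ P, (n + 1) * ∑ j ∈ Finset.range (κ p), (κ p - j) := by
  have h := finrank_le_add_sum_of_successive_conditions (flagSpace K n a) (fun _ => 0)
    (fun c => pointCoeff c.1 c.2.1 c.2.2.2 c.2.2.1) (fun _ => ⊤) (pointConditions P κ n)
    (fun _ _ _ _ _ => Submodule.mem_top)
  refine h.trans_eq (congrArg _ ?_)
  simp [pointConditions]

end PointVanishing

section DimensionCount

variable {K : Type*} [Field K]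

/-- The polynomials of degree less than `b` divisible by `D`. -/
noncomputable def multiplesDegreeLT (D : K[X]) (b : ℕ) : Submodule K K[X] :=
  (degreeLT K (b - D.natDegree)).map (LinearMap.mulLeft K D)

instance finiteDimensional_degreeLT (b : ℕ) : FiniteDimensional K (degreeLT K b) :=
  Module.Finite.equiv (degreeLTEquiv K b).symm

instance finiteDimensional_multiplesDegreeLT (D : K[X]) (b : ℕ) :
    FiniteDimensional K (multiplesDegreeLT D b) := by
  rw [multiplesDegreeLT]
  infer_instance

lemma mem_multiplesDegreeLT {D P : K[X]} {b : ℕ} (hD : D ≠ 0) (hdvd : D ∣ P)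
    (hP : P ∈ degreeLT K b) : P ∈ multiplesDegreeLT D b := by
  obtain ⟨Q, rfl⟩ := hdvd
  exact ⟨Q, mem_degreeLT_sub_of_mul hD hP, rfl⟩

lemma finrank_multiplesDegreeLT_le (D : K[X]) (b : ℕ) :
    Module.finrank K (multiplesDegreeLT D b) ≤ b - D.natDegree := by
  refine (Submodule.finrank_map_le _ _).trans_eq ?_
  rw [(degreeLTEquiv K _).finrank_eq, Module.finrank_fin_fun]

open Classical in
/-- The polynomial in `u` vanishing to order `κ p - j` at each point `p` of `P` on the line
`v = s * u + t`. -/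
noncomputable def lineDivisor (P : Finset (K × K)) (κ : K × K → ℕ) (s t : K) (j : ℕ) : K[X] :=
  ∏ p ∈ P with s * p.1 + t = p.2, (X - C p.1) ^ (κ p - j)

lemma lineDivisor_monic (P : Finset (K × K)) (κ : K × K → ℕ) (s t : K) (j : ℕ) :
    (lineDivisor P κ s t j).Monic :=
  monic_prod_of_monic _ _ fun p _ => (monic_X_sub_C p.1).pow _

open Classical in
lemma natDegree_lineDivisor (P : Finset (K × K)) (κ : K × K → ℕ) (s t : K) (j : ℕ) :
    (lineDivisor P κ s t j).natDegree = ∑ p ∈ P with s * p.1 + t = p.2, (κ p - j) := by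
  rw [lineDivisor, natDegree_prod_of_monic _ _ fun p _ => (monic_X_sub_C p.1).pow _]
  simp only [natDegree_pow, natDegree_X_sub_C, mul_one]

open Classical in
lemma lineDivisor_dvd_lineCoeff {P : Finset (K × K)} {κ : K × K → ℕ} {n a : ℕ} {F : K[X][X][X]}
    (hF : F ∈ pointVanishingSpace P κ n a) (s t : K) (j k : ℕ) :
    lineDivisor P κ s t j ∣ lineCoeff s t j k F := by
  refine Finset.prod_dvd_of_coprime (fun p hp q hq hpq => ?_) fun p hp => ?_
  · have hfst : p.1 ≠ q.1 := fun hfst => hpq <| Prod.ext hfst <| by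
      rw [← (Finset.mem_filter.1 hp).2, hfst, (Finset.mem_filter.1 hq).2]
    exact (isCoprime_X_sub_C_of_isUnit_sub (sub_ne_zero.2 hfst).isUnit).pow
  · obtain ⟨hpP, hp⟩ := Finset.mem_filter.1 hp
    exact X_sub_C_pow_dvd_lineCoeff
      (fun k i j hij => pointCoeff_eq_zero_of_mem hF hpP hij k) hp j k

variable {ι : Type*} [Fintype ι] {s t : ι → K}

open Classical in
lemma finrank_pointVanishingSpace_le [Infinite K] (s t : ι → K) (hι : 3 ≤ Fintype.card ι)
    (P : Finset (K × K)) (κ : K × K → ℕ) (n a : ℕ) :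
    Module.finrank K (pointVanishingSpace P κ n a) ≤
      Module.finrank K (lineVanishingSpace s t n a) +
        ∑ i, ∑ x ∈ lineConditions (Fintype.card ι) n,
          (a - x.1 + x.2 - ∑ p ∈ P with i ∈ linesThrough s t p, (κ p - x.1)) := by
  have : FiniteDimensional K (pointVanishingSpace P κ n a) :=
    Submodule.finiteDimensional_of_le inf_le_left
  have : FiniteDimensional K (lineVanishingSpace s t n a) :=
    Submodule.finiteDimensional_of_le inf_le_left
  let D (c : ι × ℕ × ℕ) : K[X] := lineDivisor P κ (s c.1) (t c.1) c.2.1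
  refine (finrank_le_add_sum_of_successive_conditions (pointVanishingSpace P κ n a)
    (fun c : ι × ℕ × ℕ => c.2.1) (fun c => lineCoeff (s c.1) (t c.1) c.2.1 c.2.2)
    (fun c => multiplesDegreeLT (D c) (a - c.2.1 + c.2.2))
    (Finset.univ ×ˢ lineConditions (Fintype.card ι) n) ?_).trans
    (add_le_add (Submodule.finrank_mono (inf_le_inf_right _ inf_le_left)) ?_)
  · rintro F hF ⟨i, j, k⟩ hc hlower
    refine mem_multiplesDegreeLT (lineDivisor_monic ..).ne_zero
      (lineDivisor_dvd_lineCoeff hF ..) ?_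
    refine coeff_recenterLine_mem_degreeLT (mem_flagSpace.1 hF.1).2 fun j' k' hjk hj => ?_
    refine hlower ⟨i, j', k'⟩ ?_ hj
    have hcard : Fintype.card ι ≠ 0 := by lia
    simp only [Finset.mem_product, Finset.mem_univ, true_and, mem_lineConditions hcard] at hc ⊢
    nlinarith
  · rw [Finset.sum_product]
    refine Finset.sum_le_sum fun i _ => Finset.sum_le_sum fun x _ => ?_
    refine (finrank_multiplesDegreeLT_le _ _).trans_eq ?_
    simp only [D, natDegree_lineDivisor, mem_linesThrough]

open Classical in
theorem sum_le_of_linesThrough_card_le [CharZero K] (hs : Function.Injective s)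
    (ht : Function.Injective t) (hι : 3 ≤ Fintype.card ι)
    (hmult : ∀ p, 3 * (linesThrough s t p).card ≤ 2 * Fintype.card ι)
    (P : Finset (K × K)) (κ : K × K → ℕ) (n a : ℕ) :
    ∑ b ∈ Finset.range a, ∑ k ∈ Finset.range (n + 1), (b + n + 1 - k) ≤
      ∑ b ∈ Finset.range a, (n + 1) * (b + 1 - n) +
        ∑ i, ∑ x ∈ lineConditions (Fintype.card ι) n,
          (a - x.1 + x.2 - ∑ p ∈ P with i ∈ linesThrough s t p, (κ p - x.1)) +
        ∑ p ∈ P, (n + 1) * ∑ j ∈ Finset.range (κ p), (κ p - j) :=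
  (sum_le_finrank_flagSpace n a).trans <|
    (finrank_flagSpace_le_pointVanishingSpace P κ n a).trans <|
    Nat.add_le_add_right ((finrank_pointVanishingSpace_le s t hι P κ n a).trans <|
      Nat.add_le_add_right (finrank_lineVanishingSpace_le hs ht (by lia) hmult n a) _) _

end DimensionCount

section Incidence

variable {K ι : Type*} [Field K] [Fintype ι] {s t : ι → K}

/-- The intersection of the lines `v = s i * u + t i` and `v = s i' * u + t i'`, for distinct slopes
`s i` and `s i'`. -/
noncomputable def crossing (s t : ι → K) (i i' : ι) : K × K :=
  ((t i' - t i) / (s i - s i'), s i * ((t i' - t i) / (s i - s i')) + t i)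

lemma crossing_eq_iff (hs : Function.Injective s) {i i' : ι} (h : i ≠ i') {p : K × K} :
    crossing s t i i' = p ↔ i ∈ linesThrough s t p ∧ i' ∈ linesThrough s t p := by
  have hslope : s i - s i' ≠ 0 := sub_ne_zero.2 (hs.ne h)
  obtain ⟨u, v⟩ := p
  simp only [crossing, mem_linesThrough, Prod.mk.injEq, div_eq_iff hslope]
  constructor
  · rintro ⟨hu, rfl⟩
    rw [hu, mul_div_cancel_right₀ _ hslope]
    exact ⟨rfl, by linear_combination hu⟩
  · rintro ⟨rfl, h'⟩
    have hu : t i' - t i = u * (s i - s i') := by linear_combination h'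
    exact ⟨hu, by rw [hu, mul_div_cancel_right₀ _ hslope]⟩

open Classical in
/-- The points lying on at least two of the lines `v = s i * u + t i`. -/
noncomputable def multiplePoints (s t : ι → K) : Finset (K × K) :=
  Finset.univ.offDiag.image fun x => crossing s t x.1 x.2

lemma mem_multiplePoints (hs : Function.Injective s) {p : K × K} :
    p ∈ multiplePoints s t ↔ 2 ≤ (linesThrough s t p).card := by
  classical
  rw [multiplePoints, Finset.mem_image, ← Nat.lt_iff_add_one_le, Finset.one_lt_card]
  constructor
  · rintro ⟨⟨i, i'⟩, hne, hp⟩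
    rw [Finset.mem_offDiag] at hne
    obtain ⟨hi, hi'⟩ := (crossing_eq_iff hs hne.2.2).1 hp
    exact ⟨i, hi, i', hi', hne.2.2⟩
  · rintro ⟨i, hi, i', hi', hne⟩
    exact ⟨(i, i'), by simpa using hne, (crossing_eq_iff hs hne).2 ⟨hi, hi'⟩⟩

open Classical in
/-- The multiple points of the arrangement on the line `v = s i * u + t i`. -/
noncomputable def pointsOn (s t : ι → K) (i : ι) : Finset (K × K) :=
  {p ∈ multiplePoints s t | i ∈ linesThrough s t p}

lemma mem_pointsOn {i : ι} {p : K × K} :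
    p ∈ pointsOn s t i ↔ p ∈ multiplePoints s t ∧ i ∈ linesThrough s t p := by
  simp [pointsOn]

lemma two_le_card_of_mem_pointsOn (hs : Function.Injective s) {i : ι} {p : K × K}
    (hp : p ∈ pointsOn s t i) : 2 ≤ (linesThrough s t p).card :=
  (mem_multiplePoints hs).1 (mem_pointsOn.1 hp).1

lemma sum_pointsOn_card_sub_one (hs : Function.Injective s) (i : ι) :
    ∑ p ∈ pointsOn s t i, ((linesThrough s t p).card - 1) = Fintype.card ι - 1 := by
  classical
  have hmaps : ∀ i' ∈ Finset.univ.erase i, crossing s t i i' ∈ pointsOn s t i := fun i' hi' => by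
    have hne : i ≠ i' := (Finset.ne_of_mem_erase hi').symm
    refine mem_pointsOn.2 ⟨Finset.mem_image.2 ⟨(i, i'), by simpa using hne, rfl⟩, ?_⟩
    exact ((crossing_eq_iff hs hne).1 rfl).1
  rw [← Finset.card_univ, ← Finset.card_erase_of_mem (Finset.mem_univ i),
    Finset.card_eq_sum_card_fiberwise hmaps]
  refine Finset.sum_congr rfl fun p hp => ?_
  have hi := (mem_pointsOn.1 hp).2
  rw [← Finset.card_erase_of_mem hi]
  congr 1
  ext i'
  simp only [Finset.mem_erase, Finset.mem_filter, Finset.mem_univ, and_true]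
  refine and_congr_right fun hne => ?_
  rw [crossing_eq_iff hs (Ne.symm hne), and_iff_right hi]

lemma sum_pointsOn_card (hs : Function.Injective s) (i : ι) :
    ∑ p ∈ pointsOn s t i, (linesThrough s t p).card + 1 =
      Fintype.card ι + (pointsOn s t i).card := by
  have hcard : 0 < Fintype.card ι := Fintype.card_pos_iff.2 ⟨i⟩
  have hsum : ∑ p ∈ pointsOn s t i, (linesThrough s t p).card =
      ∑ p ∈ pointsOn s t i, ((linesThrough s t p).card - 1 + 1) :=
    Finset.sum_congr rfl fun p hp => by
      have := two_le_card_of_mem_pointsOn hs hp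
      lia
  rw [hsum, Finset.sum_add_distrib, sum_pointsOn_card_sub_one hs, Finset.sum_const, smul_eq_mul]
  lia

lemma card_pointsOn_lt (hs : Function.Injective s) (i : ι) :
    (pointsOn s t i).card < Fintype.card ι := by
  have hle : (pointsOn s t i).card * 2 ≤ ∑ p ∈ pointsOn s t i, (linesThrough s t p).card :=
    Finset.card_nsmul_le_sum _ _ _ fun p hp => two_le_card_of_mem_pointsOn hs hp
  have := sum_pointsOn_card (t := t) hs i
  lia

lemma pointsOn_nonempty (hs : Function.Injective s) (hι : 2 ≤ Fintype.card ι) (i : ι) :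
    (pointsOn s t i).Nonempty := by
  rw [Finset.nonempty_iff_ne_empty]
  intro hempty
  have := sum_pointsOn_card_sub_one (t := t) hs i
  rw [hempty, Finset.sum_empty] at this
  lia

lemma sum_sum_pointsOn {M : Type*} [AddCommMonoid M] (f : K × K → M) :
    ∑ i, ∑ p ∈ pointsOn s t i, f p =
      ∑ p ∈ multiplePoints s t, (linesThrough s t p).card • f p := by
  rw [Finset.sum_comm' (t' := multiplePoints s t) (s' := linesThrough s t) (by
    simp [mem_pointsOn, and_comm])]
  simp

lemma sum_card_pointsOn :
    ∑ i, (pointsOn s t i).card = ∑ p ∈ multiplePoints s t, (linesThrough s t p).card := by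
  simpa using sum_sum_pointsOn (s := s) (t := t) (fun _ => (1 : ℕ))

lemma sum_multiplePoints_card_sq (hs : Function.Injective s) :
    ∑ p ∈ multiplePoints s t, (linesThrough s t p).card ^ 2 + Fintype.card ι =
      Fintype.card ι ^ 2 + ∑ p ∈ multiplePoints s t, (linesThrough s t p).card := by
  have hsum := Finset.sum_congr (s₁ := Finset.univ) rfl fun i _ => sum_pointsOn_card (t := t) hs i
  rw [Finset.sum_add_distrib, Finset.sum_add_distrib, sum_sum_pointsOn, sum_card_pointsOn] at hsum
  simpa [sq] using hsum

lemma card_le_sum_multiplePoints_card (hs : Function.Injective s) (hι : 2 ≤ Fintype.card ι) :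
    Fintype.card ι ≤ ∑ p ∈ multiplePoints s t, (linesThrough s t p).card := by
  simpa [← sum_card_pointsOn] using Finset.card_nsmul_le_sum Finset.univ
    (fun i => (pointsOn s t i).card) 1 fun i _ => (pointsOn_nonempty hs hι i).card_pos

lemma sum_multiplePoints_card_add_card_le (hs : Function.Injective s) :
    ∑ p ∈ multiplePoints s t, (linesThrough s t p).card + Fintype.card ι ≤ Fintype.card ι ^ 2 := by
  rw [← sum_card_pointsOn]
  simpa [Finset.sum_add_distrib, sq] using Finset.sum_le_card_nsmul Finset.univ
    (fun i => (pointsOn s t i).card + 1) (Fintype.card ι) fun i _ => card_pointsOn_lt hs i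

end Incidence

section Sums

lemma two_mul_sum_range_tsub (κ : ℕ) : 2 * ∑ j ∈ Finset.range κ, (κ - j) = κ * (κ + 1) := by
  induction κ with
  | zero => simp
  | succ κ ih =>
    simp only [Finset.sum_range_succ', Nat.add_sub_add_right, Nat.sub_zero, mul_add, ih]
    ring

lemma two_mul_sum_range_add_one_tsub (n d : ℕ) :
    2 * ∑ b ∈ Finset.range (n + d), (b + 1 - n) = d * (d + 1) := by
  induction d with
  | zero =>
    rw [Finset.sum_eq_zero fun b hb => by rw [Finset.mem_range] at hb; lia]
    simp
  | succ d ih =>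
    rw [← add_assoc, Finset.sum_range_succ, mul_add, ih, add_assoc n, Nat.add_sub_cancel_left]
    ring

lemma two_mul_sum_range_add_tsub (b n : ℕ) :
    2 * ∑ k ∈ Finset.range (n + 1), (b + n + 1 - k) = (n + 1) * (2 * b + n + 2) := by
  induction n with
  | zero => simp; ring
  | succ n ih =>
    simp only [← add_assoc b] at ih ⊢
    rw [Finset.sum_range_succ', mul_add]
    simp only [Nat.add_sub_add_right, ih, Nat.sub_zero]
    ring

lemma two_mul_sum_sum_range_add_tsub (n a : ℕ) :
    2 * ∑ b ∈ Finset.range a, ∑ k ∈ Finset.range (n + 1), (b + n + 1 - k) =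
      (n + 1) * a * (a + n + 1) := by
  induction a with
  | zero => simp
  | succ a ih =>
    rw [Finset.sum_range_succ, mul_add, ih, two_mul_sum_range_add_tsub]
    ring

lemma sum_range_quadratic (M : ℕ) (a b c : ℝ) :
    ∑ j ∈ Finset.range M, (a + b * j + c * (j : ℝ) ^ 2) =
      a * M + b * (M * (M - 1) / 2) + c * (M * (M - 1) * (2 * M - 1) / 6) := by
  induction M with
  | zero => simp
  | succ k ih =>
    rw [Finset.sum_range_succ, ih]
    push_cast
    ring

lemma nonpos_of_forall_mul_cube_le {a b c : ℝ} (h : ∀ m : ℕ, a * m ^ 3 ≤ b * m ^ 2 + c * m) :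
    a ≤ 0 := by
  have hε : Filter.Tendsto (fun m : ℕ => 1 / ((m : ℝ) + 1)) Filter.atTop (nhds 0) :=
    tendsto_one_div_add_atTop_nhds_zero_nat
  have hlim := (hε.const_mul b).add ((hε.pow 2).const_mul c)
  rw [mul_zero, zero_pow two_ne_zero, mul_zero, add_zero] at hlim
  refine ge_of_tendsto' hlim fun m => ?_
  have hm : (0 : ℝ) < (m : ℝ) + 1 := by positivity
  have hcube := h (m + 1)
  rw [Nat.cast_add_one, ← le_div_iff₀ (pow_pos hm 3)] at hcube
  refine hcube.trans_eq ?_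
  field_simp

lemma sum_lineConditions {N : ℕ} (hN : N ≠ 0) (m : ℕ) (g : ℕ → ℕ → ℝ) :
    ∑ x ∈ lineConditions N (2 * N * m), g x.1 x.2 =
      ∑ j ∈ Finset.range (6 * m), ∑ k ∈ Finset.range ((N * (6 * m - j) + 2) / 3), g j k := by
  refine Finset.sum_finset_product' _ _ _ ?_
  rintro ⟨j, k⟩
  rw [mem_lineConditions hN, Finset.mem_range, Finset.mem_range]
  have hbound : N * j + 3 * k < 3 * (2 * N * m) ↔ 3 * k < N * (6 * m - j) := by
    rw [Nat.mul_sub, Nat.lt_sub_iff_add_lt']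
    lia
  rw [hbound]
  constructor
  · intro h
    exact ⟨by_contra fun hj => by simp [Nat.sub_eq_zero_of_le (not_lt.1 hj)] at h, by lia⟩
  · rintro ⟨-, h⟩
    lia

lemma sum_range_linear_le {B : ℕ} {y α γ : ℝ} (hα : 0 ≤ α) (hγ : 0 ≤ γ) (hB : B ≤ y + 1)
    (hy : 0 ≤ y) :
    ∑ k ∈ Finset.range B, (α + γ * k) ≤ α * (y + 1) + γ * (y * (y + 1) / 2) := by
  have hsum := sum_range_quadratic B α γ 0
  simp only [zero_mul, add_zero] at hsum
  rw [hsum]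
  gcongr α * ?_ + γ * (?_ / 2)
  rcases Nat.eq_zero_or_pos B with rfl | hpos
  · rw [Nat.cast_zero, zero_mul]
    positivity
  · rw [mul_comm y]
    have : (1 : ℝ) ≤ B := by exact_mod_cast hpos
    gcongr
    linarith

lemma sum_lineConditions_linear_le {N : ℕ} (hN : N ≠ 0) (m : ℕ) {α β γ : ℝ} (hα : 0 ≤ α)
    (hβ : 0 ≤ β) (hγ : 0 ≤ γ) :
    ∑ x ∈ lineConditions N (2 * N * m), (α + β * x.1 + γ * x.2) ≤
      α * (m * (N * (6 * m + 1) + 6)) + β * (m * (N * (36 * m ^ 2 - 1) / 3 + 3 * (6 * m - 1))) +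
        γ * (N * m * (6 * m + 1) * (N * (12 * m + 1) + 9) / 18) := by
  rw [sum_lineConditions hN m fun j k => α + β * j + γ * k]
  calc _ ≤ ∑ j ∈ Finset.range (6 * m), ((α + β * j) * (N * (6 * m - j) / 3 + 1) +
        γ * (N * (6 * m - j) / 3 * (N * (6 * m - j) / 3 + 1) / 2)) := by
        refine Finset.sum_le_sum fun j hj => ?_
        rw [Finset.mem_range] at hj
        have hcast : ((6 * m - j : ℕ) : ℝ) = 6 * m - j := by push_cast [hj.le]; ring
        refine sum_range_linear_le (by positivity) hγ ?_ (by rw [← hcast]; positivity)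
        rw [← hcast]
        refine Nat.cast_div_le.trans ?_
        push_cast
        linarith
    _ = ∑ j ∈ Finset.range (6 * m),
        ((α * (2 * N * m + 1) + γ * N * m * (2 * N * m + 1)) +
          (β * (2 * N * m + 1) - α * N / 3 - γ * N * (4 * N * m + 1) / 6) * j +
          (γ * N ^ 2 / 18 - β * N / 3) * (j : ℝ) ^ 2) :=
      Finset.sum_congr rfl fun j _ => by ring
    _ = _ := by
      rw [sum_range_quadratic]
      push_cast
      ring

end Sums

section Asymptotics

variable {K ι : Type*} [Field K] [Fintype ι] {s t : ι → K}

lemma le_sum_pointsOn_tsub (hs : Function.Injective s) (i : ι) (m x : ℕ) :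
    3 * m * (Fintype.card ι + (pointsOn s t i).card) ≤
      ∑ p ∈ pointsOn s t i, (3 * (linesThrough s t p).card * m - x) +
        (pointsOn s t i).card * x + 3 * m := by
  have hle : ∑ p ∈ pointsOn s t i, 3 * (linesThrough s t p).card * m ≤
      ∑ p ∈ pointsOn s t i, (3 * (linesThrough s t p).card * m - x + x) :=
    Finset.sum_le_sum fun p _ => le_tsub_add
  rw [Finset.sum_add_distrib, ← Finset.sum_mul, ← Finset.mul_sum, Finset.sum_const,
    smul_eq_mul] at hle
  rw [← sum_pointsOn_card hs i]
  linarith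

lemma lineConditions_tsub_le (hs : Function.Injective s) (hι : 2 ≤ Fintype.card ι) (i : ι) {m : ℕ}
    {x : ℕ × ℕ} (hx : x ∈ lineConditions (Fintype.card ι) (2 * Fintype.card ι * m)) :
    ((6 * Fintype.card ι * m - x.1 + x.2 -
        ∑ p ∈ pointsOn s t i, (3 * (linesThrough s t p).card * m - x.1) : ℕ) : ℝ) ≤
      3 * m * (Fintype.card ι + 1 - (pointsOn s t i).card) +
        ((pointsOn s t i).card - 1) * x.1 + x.2 := by
  have hr1 : (1 : ℝ) ≤ (pointsOn s t i).card := by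
    exact_mod_cast (pointsOn_nonempty hs hι i).card_pos
  have hrN : ((pointsOn s t i).card : ℝ) ≤ Fintype.card ι := by
    exact_mod_cast (card_pointsOn_lt hs i).le
  have hx1 : x.1 ≤ 6 * Fintype.card ι * m := by
    have := (mem_lineConditions (by lia)).1 hx
    nlinarith
  have hsum := Nat.cast_le (α := ℝ) |>.2 (le_sum_pointsOn_tsub (t := t) hs i m x.1)
  rcases le_total (6 * Fintype.card ι * m - x.1 + x.2)
    (∑ p ∈ pointsOn s t i, (3 * (linesThrough s t p).card * m - x.1)) with hle | hle
  · rw [Nat.sub_eq_zero_of_le hle, Nat.cast_zero]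
    have : 0 ≤ 3 * (m : ℝ) * (Fintype.card ι + 1 - (pointsOn s t i).card) :=
      mul_nonneg (by positivity) (by linarith)
    have : 0 ≤ (((pointsOn s t i).card : ℝ) - 1) * x.1 :=
      mul_nonneg (sub_nonneg.2 hr1) (Nat.cast_nonneg _)
    positivity
  · push_cast [hle, hx1] at hsum ⊢
    linarith

lemma sum_lineConditions_tsub_le (hs : Function.Injective s) (hι : 2 ≤ Fintype.card ι) {m : ℕ}
    {N T : ℝ} (hN : Fintype.card ι = N)
    (hT : (∑ p ∈ multiplePoints s t, (linesThrough s t p).card : ℕ) = T) :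
    ((∑ i, ∑ x ∈ lineConditions (Fintype.card ι) (2 * Fintype.card ι * m),
      (6 * Fintype.card ι * m - x.1 + x.2 -
        ∑ p ∈ pointsOn s t i, (3 * (linesThrough s t p).card * m - x.1)) : ℕ) : ℝ) ≤
      3 * m * (N ^ 2 + N - T) * (m * (N * (6 * m + 1) + 6)) +
        (T - N) * (m * (N * (36 * m ^ 2 - 1) / 3 + 3 * (6 * m - 1))) +
          N * (N * m * (6 * m + 1) * (N * (12 * m + 1) + 9) / 18) := by
  have hTsum : ∑ i, ((pointsOn s t i).card : ℝ) = T := by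
    rw [← hT, ← sum_card_pointsOn, Nat.cast_sum]
  have hNT : N ≤ T := by
    rw [← hN, ← hT]
    exact_mod_cast card_le_sum_multiplePoints_card hs hι
  have hTN : T + N ≤ N ^ 2 := by
    rw [← hN, ← hT]
    exact_mod_cast sum_multiplePoints_card_add_card_le hs
  have hN0 : 0 ≤ N := by simp [← hN]
  rw [Finset.sum_comm, Nat.cast_sum]
  calc _ ≤ ∑ x ∈ lineConditions (Fintype.card ι) (2 * Fintype.card ι * m),
        (3 * m * (N ^ 2 + N - T) + (T - N) * x.1 + N * x.2) := by
        refine Finset.sum_le_sum fun x hx => ?_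
        rw [Nat.cast_sum]
        refine (Finset.sum_le_sum fun i _ => lineConditions_tsub_le hs hι i hx).trans_eq ?_
        simp only [Finset.sum_add_distrib, ← Finset.sum_mul, ← Finset.mul_sum,
          Finset.sum_sub_distrib, hTsum, Finset.sum_const, Finset.card_univ, nsmul_eq_mul, hN]
        ring
    _ ≤ _ := by
      have := sum_lineConditions_linear_le (N := Fintype.card ι) (by lia) m
        (α := 3 * m * (N ^ 2 + N - T)) (β := T - N) (γ := N)
        (mul_nonneg (by positivity) (by linarith)) (by linarith) hN0
      rwa [hN] at this

lemma two_mul_sum_multiplePoints_tsub (hs : Function.Injective s) (m : ℕ) {N T : ℝ}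
    (hN : Fintype.card ι = N)
    (hT : (∑ p ∈ multiplePoints s t, (linesThrough s t p).card : ℕ) = T) :
    2 * ((∑ p ∈ multiplePoints s t, ∑ j ∈ Finset.range (3 * (linesThrough s t p).card * m),
      (3 * (linesThrough s t p).card * m - j) : ℕ) : ℝ) =
      9 * m ^ 2 * (N ^ 2 - N + T) + 3 * m * T := by
  have hsq : ((∑ p ∈ multiplePoints s t, (linesThrough s t p).card ^ 2 + Fintype.card ι : ℕ) : ℝ) =
      N ^ 2 + T := by
    rw [sum_multiplePoints_card_sq hs, Nat.cast_add, hT, Nat.cast_pow, hN]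
  rw [Nat.cast_add, hN, ← eq_sub_iff_add_eq] at hsq
  have hsum : 2 * ∑ p ∈ multiplePoints s t,
        ∑ j ∈ Finset.range (3 * (linesThrough s t p).card * m),
          (3 * (linesThrough s t p).card * m - j) =
      9 * m ^ 2 * ∑ p ∈ multiplePoints s t, (linesThrough s t p).card ^ 2 +
        3 * m * ∑ p ∈ multiplePoints s t, (linesThrough s t p).card := by
    rw [Finset.mul_sum, Finset.mul_sum, Finset.mul_sum, ← Finset.sum_add_distrib]
    refine Finset.sum_congr rfl fun p _ => ?_
    rw [two_mul_sum_range_tsub]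
    ring
  have hcast := congrArg (Nat.cast : ℕ → ℝ) hsum
  rw [Nat.cast_mul, Nat.cast_add, Nat.cast_mul, hsq, Nat.cast_mul (3 * m), hT] at hcast
  push_cast at hcast ⊢
  linarith

/-- The dimension count for `n = 2Nm`, `a = 6Nm` and `κ p = 3 μ(p) m`, doubled. -/
lemma cubic_le_of_linesThrough_card_le [CharZero K] (hs : Function.Injective s)
    (ht : Function.Injective t) (hι : 3 ≤ Fintype.card ι)
    (hmult : ∀ p, 3 * (linesThrough s t p).card ≤ 2 * Fintype.card ι) (m : ℕ) {N T : ℝ}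
    (hN : Fintype.card ι = N)
    (hT : (∑ p ∈ multiplePoints s t, (linesThrough s t p).card : ℕ) = T) :
    (2 * N * m + 1) * (6 * N * m) * (8 * N * m + 1) ≤
      (2 * N * m + 1) * (4 * N * m * (4 * N * m + 1)) +
        2 * (3 * m * (N ^ 2 + N - T) * (m * (N * (6 * m + 1) + 6)) +
          (T - N) * (m * (N * (36 * m ^ 2 - 1) / 3 + 3 * (6 * m - 1))) +
          N * (N * m * (6 * m + 1) * (N * (12 * m + 1) + 9) / 18)) +
        (2 * N * m + 1) * (9 * m ^ 2 * (N ^ 2 - N + T) + 3 * m * T) := by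
  have hcount := sum_le_of_linesThrough_card_le hs ht hι hmult (multiplePoints s t)
    (fun p => 3 * (linesThrough s t p).card * m) (2 * Fintype.card ι * m) (6 * Fintype.card ι * m)
  have hflag := two_mul_sum_sum_range_add_tsub (2 * Fintype.card ι * m) (6 * Fintype.card ι * m)
  have hramp := two_mul_sum_range_add_one_tsub (2 * Fintype.card ι * m) (4 * Fintype.card ι * m)
  have hline := sum_lineConditions_tsub_le hs (by lia) (m := m) hN hT
  have hpoint := two_mul_sum_multiplePoints_tsub hs m hN hT
  rw [← add_mul, ← add_mul, show 2 + 4 = 6 from rfl] at hramp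
  rw [← Finset.mul_sum, ← Finset.mul_sum, ← Nat.cast_le (α := ℝ)] at hcount
  rw [← Nat.cast_inj (R := ℝ)] at hflag hramp
  simp only [Nat.cast_add, Nat.cast_mul, Nat.cast_ofNat, Nat.cast_one, hN] at hcount hflag hramp
  simp only [pointsOn] at hline
  linear_combination 2 * hcount - hflag + (2 * N * m + 1) * hramp + 2 * hline +
    (2 * N * m + 1) * hpoint

lemma three_le_card_of_linesThrough_card_le [Nonempty ι] (hs : Function.Injective s)
    (hmult : ∀ p, 3 * (linesThrough s t p).card ≤ 2 * Fintype.card ι) : 3 ≤ Fintype.card ι := by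
  obtain ⟨i⟩ := ‹Nonempty ι›
  have hi : i ∈ linesThrough s t (0, t i) := mem_linesThrough.2 (by simp)
  have hι : 2 ≤ Fintype.card ι := by
    have := Finset.card_pos.2 ⟨i, hi⟩
    have := hmult (0, t i)
    lia
  obtain ⟨p, hp⟩ := pointsOn_nonempty (t := t) hs hι i
  have := two_le_card_of_mem_pointsOn hs hp
  have := hmult p
  lia

theorem card_sq_add_le_of_linesThrough_card_le [CharZero K] (hs : Function.Injective s)
    (ht : Function.Injective t)
    (hmult : ∀ p, 3 * (linesThrough s t p).card ≤ 2 * Fintype.card ι) :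
    Fintype.card ι ^ 2 + 3 * Fintype.card ι ≤
      3 * ∑ p ∈ multiplePoints s t, (linesThrough s t p).card := by
  cases isEmpty_or_nonempty ι
  · simp
  have hι := three_le_card_of_linesThrough_card_le hs hmult
  generalize hN : (Fintype.card ι : ℝ) = N
  generalize hT : ((∑ p ∈ multiplePoints s t, (linesThrough s t p).card : ℕ) : ℝ) = T
  have hN0 : 0 < N := by
    rw [← hN]
    exact_mod_cast (by lia : 0 < Fintype.card ι)
  have hlead : 2 * N * (N ^ 2 + 3 * N - 3 * T) ≤ 0 :=
    nonpos_of_forall_mul_cube_le (b := 8 * N ^ 3 + 21 * N ^ 2 - 9 * N + 9 * T)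
      (c := 3 * T - 2 * N - 2 / 3 * (T - N) * (N + 9) + N ^ 2 * (N + 9) / 9) fun m => by
        linear_combination cubic_le_of_linesThrough_card_le hs ht hι hmult m hN hT
  have hle : N ^ 2 + 3 * N ≤ 3 * T :=
    sub_nonpos.1 (nonpos_of_mul_nonpos_right hlead (by positivity))
  rw [← hN, ← hT] at hle
  exact_mod_cast hle

end Asymptotics

section Projective

variable {K V : Type*} [Field K] [AddCommGroup V] [Module K V] {L : Finset (Submodule K V)}

/-- The number of subspaces in `L` containing the subspace `p`. For `L` an arrangement of lines in
the projective plane on `V` and `p` a point, this is the multiplicity of `p`. -/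
noncomputable def pointMult (L : Finset (Submodule K V)) (p : Submodule K V) : ℕ :=
  Set.ncard {ℓ | ℓ ∈ L ∧ p ≤ ℓ}

lemma finrank_inf_lt {ℓ ℓ' : Submodule K V} (h : Module.finrank K ℓ = 2)
    (h' : Module.finrank K ℓ' = 2) (hne : ℓ ≠ ℓ') : Module.finrank K ↑(ℓ ⊓ ℓ') < 2 := by
  have : Module.Finite K ℓ := Module.finite_of_finrank_pos (by lia)
  have : Module.Finite K ℓ' := Module.finite_of_finrank_pos (by lia)
  rw [← h]
  refine Submodule.finrank_lt_finrank_of_lt (inf_le_left.lt_of_ne fun heq => hne ?_)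
  exact Submodule.eq_of_le_of_finrank_eq (inf_eq_left.1 heq) (h.trans h'.symm)

lemma finite_setOf_two_le_pointMult (hL : ∀ ℓ ∈ L, Module.finrank K ℓ = 2) :
    {p : Submodule K V | Module.finrank K p = 1 ∧ 2 ≤ pointMult L p}.Finite := by
  refine ((L ×ˢ L).finite_toSet.image fun x => x.1 ⊓ x.2).subset ?_
  rintro p ⟨hp, hmult⟩
  have hfin : {ℓ | ℓ ∈ L ∧ p ≤ ℓ}.Finite := L.finite_toSet.subset fun ℓ h => h.1
  obtain ⟨ℓ, ⟨hℓ, hpℓ⟩, ℓ', ⟨hℓ', hpℓ'⟩, hne⟩ := (Set.one_lt_ncard hfin).1 hmult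
  have : Module.Finite K ℓ := Module.finite_of_finrank_pos (by rw [hL ℓ hℓ]; exact two_pos)
  have hlt := finrank_inf_lt (hL ℓ hℓ) (hL ℓ' hℓ') hne
  refine ⟨(ℓ, ℓ'), by simp [hℓ, hℓ'], ?_⟩
  exact (Submodule.eq_of_le_of_finrank_le (le_inf hpℓ hpℓ') (by lia)).symm

lemma exists_add_smul_mem {W : Submodule K V} (hW : Module.finrank K W + 1 = Module.finrank K V)
    {e : V} (he : e ∉ W) (x : V) : ∃ c : K, x + c • e ∈ W := by
  have : Module.Finite K V := Module.finite_of_finrank_pos (by lia)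
  have htop : W ⊔ Submodule.span K {e} = ⊤ :=
    Submodule.eq_top_of_finrank_eq (by rw [Submodule.finrank_sup_span_singleton he, hW])
  obtain ⟨w, hw, z, hz, hx⟩ := Submodule.mem_sup.1 (htop ▸ Submodule.mem_top : x ∈ _)
  obtain ⟨c, rfl⟩ := Submodule.mem_span_singleton.1 hz
  exact ⟨-c, by rwa [← hx, neg_smul, add_neg_cancel_right]⟩

lemma exists_forall_notMem [Infinite K] (S : Finset (Submodule K V)) (hS : ⊤ ∉ S) :
    ∃ x : V, ∀ W ∈ S, x ∉ W := by
  by_contra! h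
  exact Subspace.biUnion_ne_univ_of_top_notMem hS <|
    Set.eq_univ_of_forall fun x => by simpa using h x

lemma ne_top_of_finrank_le_two (hV : Module.finrank K V = 3) {W : Submodule K V}
    (hW : Module.finrank K W ≤ 2) : W ≠ ⊤ := by
  rintro rfl
  rw [finrank_top] at hW
  lia

lemma exists_notMem_inf_sup_span [Infinite K] (hV : Module.finrank K V = 3)
    (hL : ∀ ℓ ∈ L, Module.finrank K ℓ = 2) (e : V) {W : Submodule K V}
    (hW : Module.finrank K W ≤ 2) :
    ∃ x ∉ W, ∀ ℓ ∈ L, ∀ ℓ' ∈ L, ℓ ≠ ℓ' → x ∉ ℓ ⊓ ℓ' ⊔ Submodule.span K {e} := by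
  classical
  have : Module.Finite K V := Module.finite_of_finrank_pos (by lia)
  obtain ⟨x, hx⟩ := exists_forall_notMem
    (insert W (L.offDiag.image fun y => y.1 ⊓ y.2 ⊔ Submodule.span K {e})) (by
      simp only [Finset.mem_insert, Finset.mem_image, Finset.mem_offDiag, not_or, not_exists,
        not_and]
      refine ⟨(ne_top_of_finrank_le_two hV hW).symm, fun ⟨ℓ, ℓ'⟩ ⟨hℓ, hℓ', hne⟩ => ?_⟩
      have hinf := finrank_inf_lt (hL ℓ hℓ) (hL ℓ' hℓ') hne
      have hsup := Submodule.finrank_add_le_finrank_add_finrank (ℓ ⊓ ℓ') (Submodule.span K {e})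
      have hspan : Module.finrank K (Submodule.span K {e}) ≤ 1 := finrank_span_le_card {e}
      exact ne_top_of_finrank_le_two hV (by lia))
  refine ⟨x, hx W (Finset.mem_insert_self _ _), fun ℓ hℓ ℓ' hℓ' hne => hx _ ?_⟩
  exact Finset.mem_insert_of_mem (Finset.mem_image.2 ⟨(ℓ, ℓ'), by simp [hℓ, hℓ', hne], rfl⟩)

lemma mem_iff_of_add_smul_mem {W : Submodule K V} {b : Fin 3 → V} {s t : K} (hb : b 2 ∉ W)
    (hs : b 1 + s • b 2 ∈ W) (ht : b 0 + t • b 2 ∈ W) (u v : K) :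
    b 0 + u • b 1 + v • b 2 ∈ W ↔ s * u + t = v := by
  have hmem : b 0 + t • b 2 + u • (b 1 + s • b 2) ∈ W := W.add_mem ht (W.smul_mem u hs)
  rw [← W.sub_mem_iff_left hmem, show b 0 + u • b 1 + v • b 2 -
    (b 0 + t • b 2 + u • (b 1 + s • b 2)) = (v - (s * u + t)) • b 2 by module]
  refine ⟨fun hv => ?_, fun hv => by simp [hv]⟩
  by_contra hne
  exact hb ((W.smul_mem_iff (sub_ne_zero.2 (Ne.symm hne))).1 hv)

lemma injective_of_add_smul_mem {e x : V} {c : L → K} (hc : ∀ ℓ : L, x + c ℓ • e ∈ ℓ.1)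
    (hx : ∀ ℓ ∈ L, ∀ ℓ' ∈ L, ℓ ≠ ℓ' → x ∉ ℓ ⊓ ℓ' ⊔ Submodule.span K {e}) :
    Function.Injective c := by
  intro ℓ ℓ' heq
  by_contra hne
  refine hx ℓ ℓ.2 ℓ' ℓ'.2 (Subtype.coe_ne_coe.2 hne) ?_
  rw [← Submodule.add_mem_iff_left _ (Submodule.mem_sup_right
    (Submodule.smul_mem _ (c ℓ) (Submodule.mem_span_singleton_self e)))]
  exact Submodule.mem_sup_left ⟨hc ℓ, heq ▸ hc ℓ'⟩

lemma exists_affine_chart [Infinite K] (hV : Module.finrank K V = 3)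
    (hL : ∀ ℓ ∈ L, Module.finrank K ℓ = 2) :
    ∃ (b : Fin 3 → V) (s t : L → K), LinearIndependent K b ∧ Function.Injective s ∧
      Function.Injective t ∧
      ∀ (ℓ : L) (u v : K), b 0 + u • b 1 + v • b 2 ∈ ℓ.1 ↔ s ℓ * u + t ℓ = v := by
  classical
  obtain ⟨e₂, he₂⟩ := exists_forall_notMem (insert ⊥ L) (by
    rw [Finset.mem_insert, not_or]
    exact ⟨(ne_top_of_finrank_le_two hV (by simp)).symm,
      fun h => ne_top_of_finrank_le_two hV (hL ⊤ h).le rfl⟩)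
  have he₂L (ℓ : L) : e₂ ∉ ℓ.1 := he₂ ℓ (Finset.mem_insert_of_mem ℓ.2)
  have he₂0 : e₂ ≠ 0 := fun h => he₂ ⊥ (Finset.mem_insert_self _ _) (by simp [h])
  obtain ⟨e₁, he₁, he₁L⟩ := exists_notMem_inf_sup_span hV hL e₂ (W := Submodule.span K {e₂})
    ((finrank_span_le_card {e₂}).trans (by simp))
  obtain ⟨e₀, he₀, he₀L⟩ := exists_notMem_inf_sup_span hV hL e₂
    (W := Submodule.span K (Set.range ![e₁, e₂])) (finrank_range_le_card _)
  have hdim (ℓ : L) : Module.finrank K ℓ.1 + 1 = Module.finrank K V := by rw [hL ℓ ℓ.2, hV]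
  choose s hs using fun ℓ : L => exists_add_smul_mem (hdim ℓ) (he₂L ℓ) e₁
  choose t ht using fun ℓ : L => exists_add_smul_mem (hdim ℓ) (he₂L ℓ) e₀
  refine ⟨![e₀, e₁, e₂], s, t, ?_, injective_of_add_smul_mem hs he₁L,
    injective_of_add_smul_mem ht he₀L, fun ℓ => mem_iff_of_add_smul_mem (he₂L ℓ) (hs ℓ) (ht ℓ)⟩
  refine linearIndependent_finCons.2 ⟨linearIndependent_fin2.2 ⟨he₂0, fun a ha => he₁ ?_⟩, he₀⟩
  exact Submodule.mem_span_singleton.2 ⟨a, ha⟩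

/-- The point of the projective plane on `V` with affine coordinates `x`, in the chart given by
`b`. -/
def chartPoint (b : Fin 3 → V) (x : K × K) : Submodule K V :=
  Submodule.span K {b 0 + x.1 • b 1 + x.2 • b 2}

lemma finrank_chartPoint {b : Fin 3 → V} (hb : LinearIndependent K b) (x : K × K) :
    Module.finrank K (chartPoint b x) = 1 := by
  refine finrank_span_singleton fun h => one_ne_zero (α := K) ?_
  have := Fintype.linearIndependent_iff.1 hb ![1, x.1, x.2] (by simpa [Fin.sum_univ_three] using h)
  exact this 0

lemma chartPoint_injective {b : Fin 3 → V} (hb : LinearIndependent K b) :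
    Function.Injective (chartPoint (K := K) b) := by
  intro x y hxy
  obtain ⟨c, hc⟩ := Submodule.mem_span_singleton.1
    (hxy ▸ Submodule.mem_span_singleton_self _ : b 0 + x.1 • b 1 + x.2 • b 2 ∈ chartPoint b y)
  have hcoord := hb.eq_coords_of_eq (f := ![c, c * y.1, c * y.2]) (g := ![1, x.1, x.2])
    (by simpa [Fin.sum_univ_three, smul_smul] using hc)
  obtain rfl : c = 1 := hcoord 0
  exact Prod.ext (by simpa using (hcoord 1).symm) (by simpa using (hcoord 2).symm)

lemma pointMult_chartPoint {b : Fin 3 → V} {s t : L → K}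
    (h : ∀ (ℓ : L) (u v : K), b 0 + u • b 1 + v • b 2 ∈ ℓ.1 ↔ s ℓ * u + t ℓ = v) (x : K × K) :
    pointMult L (chartPoint b x) = (linesThrough s t x).card := by
  rw [pointMult, ← Finset.card_map (Function.Embedding.subtype _), ← Set.ncard_coe_finset]
  congr 1
  ext ℓ
  simp [chartPoint, Submodule.span_singleton_le_iff_mem, mem_linesThrough, ← h, and_comm]

end Projective

end LineArrangement

open LineArrangement in
theorem total_multiplicity_lower_bound_general {K V : Type*} [Field K] [CharZero K]
    [AddCommGroup V] [Module K V] (hV : Module.finrank K V = 3) (L : Finset (Submodule K V))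
    (hL : ∀ ℓ ∈ L, Module.finrank K ℓ = 2)
    (hmult : ∀ p : Submodule K V, Module.finrank K p = 1 → 3 * pointMult L p ≤ 2 * L.card) :
    L.card ^ 2 + 3 * L.card ≤
      3 * ∑ᶠ p ∈ {p : Submodule K V | Module.finrank K p = 1 ∧ 2 ≤ pointMult L p},
        pointMult L p := by
  classical
  obtain ⟨b, s, t, hb, hs, ht, hmem⟩ := exists_affine_chart hV hL
  have haffine := card_sq_add_le_of_linesThrough_card_le hs ht fun x => by
    rw [← pointMult_chartPoint hmem, Fintype.card_coe]
    exact hmult _ (finrank_chartPoint hb x)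
  rw [Fintype.card_coe] at haffine
  refine haffine.trans (Nat.mul_le_mul_left 3 ?_)
  rw [finsum_mem_eq_finite_toFinset_sum _ (finite_setOf_two_le_pointMult hL)]
  simp only [← pointMult_chartPoint hmem]
  rw [← Finset.sum_image (g := chartPoint b) (chartPoint_injective hb).injOn]
  refine Finset.sum_le_sum_of_subset (Finset.image_subset_iff.2 fun x hx => ?_)
  rw [mem_multiplePoints hs, ← pointMult_chartPoint hmem] at hx
  exact (Set.Finite.mem_toFinset _).2 ⟨finrank_chartPoint hb x, hx⟩

/-- The Corollary of Section 7.5 of the paper: if every point of `ℂP²` lies on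
fewer than `2N/3` of the `N` lines of an arrangement `L`, then
`3·∑_{p : μ(p) ≥ 2} μ(p) ≥ N² + 3N`. -/
theorem total_multiplicity_lower_bound
    (L : Finset (Submodule ℂ (Fin 3 → ℂ)))
    (hL : ∀ ℓ ∈ L, Module.finrank ℂ ℓ = 2)
    (hmult : ∀ p : Submodule ℂ (Fin 3 → ℂ), Module.finrank ℂ p = 1 →
      3 * lineMult L p < 2 * L.card) :
    L.card ^ 2 + 3 * L.card ≤
      3 * ∑ᶠ p ∈ {p : Submodule ℂ (Fin 3 → ℂ) |
        Module.finrank ℂ p = 1 ∧ 2 ≤ lineMult L p}, lineMult L p := by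
  exact total_multiplicity_lower_bound_general (by simp) L hL fun p hp => (hmult p hp).le
end

section
/- Let L be a finite set of pairwise distinct lines in ℂP² (2-dimensional ℂ-subspaces of ℂ³) with at least two elements, and let β : L → ℝ be weights satisfying: 0 < βℓ < 1 for all ℓ, Σ_{ℓ∈L}(βℓ − 1) = −3, and Σ_{ℓ∈L, p ≤ ℓ}(βℓ − 1) > −2 for every point p with μ(p) ≥ 3. For each point p with μ(p) ≥ 3 set α(p) := 1 + (1/2)·Σ_{ℓ∈L, p≤ℓ}(βℓ − 1), and let k be the number of points p with μ(p) ≥ 3. Let N be a positive integer such that N·α(p) > k for every point p with μ(p) ≥ 3, and N·(βℓ + βℓ') > 2k for all distinct ℓ, ℓ' ∈ L. Then for every point x of ℂP²: Σ_{ℓ∈L, ¬(x ≤ ℓ)} (1 − βℓ) > 1 + 2k/N. -/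
/-- The number `α(p) = 1 + (1/2)·∑_{ℓ ∋ p} (βℓ − 1)`, the conical angle
parameter at a multiple point `p` of the weighted arrangement. -/
noncomputable def alphaPt (L : Finset (Submodule ℂ (Fin 3 → ℂ)))
    (β : Submodule ℂ (Fin 3 → ℂ) → ℝ) (p : Submodule ℂ (Fin 3 → ℂ)) : ℝ :=
  1 + (1 / 2) * ∑ᶠ ℓ ∈ {ℓ : Submodule ℂ (Fin 3 → ℂ) | ℓ ∈ L ∧ p ≤ ℓ}, (β ℓ - 1)

/-! The formula for `α` makes sense at every point `x`, and `∑_{ℓ ∌ x} (1 − βℓ) = 1 + 2 α(x)`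
because `∑_ℓ (βℓ − 1) = −3`. So the claim is that `α(x) > k/N` for every `x`, which is assumed
when `x` is a multiple point. Otherwise at most two lines pass through `x`; since `βℓ ≤ 1`,
completing them to a pair of distinct lines `ℓ, ℓ'` can only decrease `α(x)`,
to `(βℓ + βℓ') / 2 > k/N`. -/

open Finset

lemma lt_sum_of_card_le_of_forall_card_eq {ι M : Type*} [AddCommMonoid M] [Preorder M]
    [AddLeftMono M] {s t : Finset ι} {n : ℕ} {w : ι → M} {C : M} (hst : s ⊆ t)
    (hsn : #s ≤ n) (hnt : n ≤ #t) (hw : ∀ i ∈ t, w i ≤ 0)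
    (h : ∀ u ⊆ t, #u = n → C < ∑ i ∈ u, w i) :
    C < ∑ i ∈ s, w i := by
  obtain ⟨u, hsu, hut, hun⟩ := exists_subsuperset_card_eq hst hsn hnt
  calc C < ∑ i ∈ u, w i := h u hut hun
    _ ≤ ∑ i ∈ s, w i :=
      sum_le_sum_of_subset_of_nonpos' hsu fun i hi _ ↦ hw i (hut hi)

lemma lt_one_add_half_sum_of_card_le_two {Λ : Type*} {L s : Finset Λ} {β : Λ → ℝ} {ε : ℝ}
    (hsL : s ⊆ L) (hs : #s ≤ 2) (hcard : 2 ≤ #L) (hβ : ∀ ℓ ∈ L, β ℓ ≤ 1)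
    (hpair : ∀ ℓ ∈ L, ∀ ℓ' ∈ L, ℓ ≠ ℓ' → 2 * ε < β ℓ + β ℓ') :
    ε < 1 + (1 / 2) * ∑ ℓ ∈ s, (β ℓ - 1) := by
  classical
  suffices 2 * ε - 2 < ∑ ℓ ∈ s, (β ℓ - 1) by linarith
  refine lt_sum_of_card_le_of_forall_card_eq hsL hs hcard
    (fun ℓ hℓ ↦ sub_nonpos.2 (hβ ℓ hℓ)) fun u huL hu ↦ ?_
  obtain ⟨ℓ, ℓ', hne, rfl⟩ := card_eq_two.1 hu
  rw [sum_pair hne]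
  linarith [hpair ℓ (huL (by simp)) ℓ' (huL (by simp)) hne]

lemma sum_filter_not_sub_eq {ι M : Type*} [AddCommGroup M] (s : Finset ι) (p : ι → Prop)
    [DecidablePred p] (f g : ι → M) :
    ∑ i ∈ s with ¬ p i, (f i - g i) = ∑ i ∈ s with p i, (g i - f i) - ∑ i ∈ s, (g i - f i) := by
  rw [← sum_filter_add_sum_filter_not s p, sub_add_cancel_left, ← sum_neg_distrib]
  simp only [neg_sub]

lemma lineMult_eq_card_filter (L : Finset (Submodule ℂ (Fin 3 → ℂ)))
    (p : Submodule ℂ (Fin 3 → ℂ)) [DecidablePred (p ≤ ·)] :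
    lineMult L p = #{ℓ ∈ L | p ≤ ℓ} := by
  rw [lineMult, ← coe_filter, Set.ncard_coe_finset]

lemma alphaPt_eq_sum_filter (L : Finset (Submodule ℂ (Fin 3 → ℂ)))
    (β : Submodule ℂ (Fin 3 → ℂ) → ℝ) (p : Submodule ℂ (Fin 3 → ℂ)) [DecidablePred (p ≤ ·)] :
    alphaPt L β p = 1 + (1 / 2) * ∑ ℓ ∈ L with p ≤ ℓ, (β ℓ - 1) := by
  rw [alphaPt, ← coe_filter, finsum_mem_coe_finset]

theorem sum_over_lines_missing_point_gt_general {Λ : Type*} {L : Finset Λ} {β : Λ → ℝ}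
    {σ k N : ℝ} (through : Λ → Prop) [DecidablePred through] (hcard : 2 ≤ #L)
    (hβ : ∀ ℓ ∈ L, β ℓ ≤ 1) (hsum : ∑ ℓ ∈ L, (β ℓ - 1) = -σ) (hN : 0 < N)
    (hmult : 3 ≤ #{ℓ ∈ L | through ℓ} →
      k < N * (1 + (1 / 2) * ∑ ℓ ∈ L with through ℓ, (β ℓ - 1)))
    (hpair : ∀ ℓ ∈ L, ∀ ℓ' ∈ L, ℓ ≠ ℓ' → 2 * k < N * (β ℓ + β ℓ')) :
    σ - 2 + 2 * k / N < ∑ ℓ ∈ L with ¬ through ℓ, (1 - β ℓ) := by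
  have hangle : k / N < 1 + (1 / 2) * ∑ ℓ ∈ L with through ℓ, (β ℓ - 1) := by
    rcases le_or_gt #{ℓ ∈ L | through ℓ} 2 with hle | hgt
    · refine lt_one_add_half_sum_of_card_le_two (filter_subset _ _) hle hcard hβ
        fun ℓ hℓ ℓ' hℓ' hne ↦ ?_
      rw [← mul_div_assoc, div_lt_iff₀' hN]
      exact hpair ℓ hℓ ℓ' hℓ' hne
    · exact (div_lt_iff₀' hN).2 (hmult hgt)
  calc σ - 2 + 2 * k / N = σ - 2 + 2 * (k / N) := by rw [mul_div_assoc]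
    _ < σ + ∑ ℓ ∈ L with through ℓ, (β ℓ - 1) := by linarith
    _ = ∑ ℓ ∈ L with ¬ through ℓ, (1 - β ℓ) := by
      rw [sum_filter_not_sub_eq, hsum, sub_neg_eq_add, add_comm]

/-- Part (1) of Lemma 7.5 of the paper: under the hypotheses of the existence
theorem, for `k` the number of points of multiplicity at least `3` and `N` a
positive integer with `N·α(p) > k` at every such point and `N·(βℓ + βℓ') > 2k`
for distinct lines, every point `x` of `ℂP²` satisfies
`∑_{ℓ ∌ x} (1 − βℓ) > 1 + 2k/N`. -/
theorem sum_over_lines_missing_point_gt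
    (L : Finset (Submodule ℂ (Fin 3 → ℂ)))
    (hL : ∀ ℓ ∈ L, Module.finrank ℂ ℓ = 2)
    (hcard : 2 ≤ L.card)
    (β : Submodule ℂ (Fin 3 → ℂ) → ℝ)
    (hβ : ∀ ℓ ∈ L, 0 < β ℓ ∧ β ℓ < 1)
    (hsum : ∑ ℓ ∈ L, (β ℓ - 1) = -3)
    (htriple : ∀ p : Submodule ℂ (Fin 3 → ℂ), Module.finrank ℂ p = 1 →
      3 ≤ lineMult L p →
      (∑ᶠ ℓ ∈ {ℓ : Submodule ℂ (Fin 3 → ℂ) | ℓ ∈ L ∧ p ≤ ℓ}, (β ℓ - 1)) > -2)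
    (k : ℕ)
    (hk : k = Set.ncard {p : Submodule ℂ (Fin 3 → ℂ) |
      Module.finrank ℂ p = 1 ∧ 3 ≤ lineMult L p})
    (N : ℕ) (hN : 0 < N)
    (hNalpha : ∀ p : Submodule ℂ (Fin 3 → ℂ), Module.finrank ℂ p = 1 →
      3 ≤ lineMult L p → (k : ℝ) < (N : ℝ) * alphaPt L β p)
    (hNbeta : ∀ ℓ ∈ L, ∀ ℓ' ∈ L, ℓ ≠ ℓ' →
      (2 * k : ℝ) < (N : ℝ) * (β ℓ + β ℓ')) :
    ∀ x : Submodule ℂ (Fin 3 → ℂ), Module.finrank ℂ x = 1 →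
      1 + 2 * (k : ℝ) / (N : ℝ) <
        ∑ᶠ ℓ ∈ {ℓ : Submodule ℂ (Fin 3 → ℂ) | ℓ ∈ L ∧ ¬ x ≤ ℓ}, (1 - β ℓ) := by
  classical
  intro x hx
  have hgt := sum_over_lines_missing_point_gt_general (x ≤ ·) hcard (fun ℓ hℓ ↦ (hβ ℓ hℓ).2.le)
    hsum (Nat.cast_pos.2 hN)
    (by simpa only [lineMult_eq_card_filter, alphaPt_eq_sum_filter] using hNalpha x hx) hNbeta
  rw [← coe_filter, finsum_mem_coe_finset]
  linarith
end

section
/- Let M be a ℂ-linear endomorphism of ℂ³ such that for every c ∈ ℂ the eigenspace ker(M − c·id) has dimension at most 1. Then M has at most three invariant 2-dimensional subspaces: there exist ℂ-subspaces W₁, W₂, W₃ of ℂ³ such that every 2-dimensional ℂ-subspace W ⊆ ℂ³ with M(W) ⊆ W equals W₁, W₂ or W₃. -/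
/-! An endomorphism `f` acts on the one-dimensional quotient by an invariant hyperplane `W` as a
scalar `c`, which says that the range of `f - c` lies in `W`. So `f - c` is not surjective, hence
`c` is an eigenvalue; and since the kernel of `f - c` is at most a line, its range is already a
hyperplane and equals `W`. Thus `W` is determined by the eigenvalue `c`, and there are at most
`dim V` eigenvalues. -/

open Module

theorem exists_subset_range_of_encard_le {α : Type*} [Nonempty α] {s : Set α} {n : ℕ}
    (hs : s.encard ≤ n) : ∃ g : Fin n → α, s ⊆ Set.range g := by
  have hfin : Finite s := Set.finite_of_encard_le_coe hs
  have hcard : Nat.card s ≤ n := by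
    rwa [← ENat.card_coe_set_eq, ENat.card_eq_coe_natCard, Nat.cast_le] at hs
  let e : s ↪ Fin n := (Finite.equivFin s).toEmbedding.trans (Fin.castLEEmb hcard)
  refine ⟨Function.extend e Subtype.val fun _ => Classical.arbitrary α, fun x hx => ?_⟩
  exact ⟨e ⟨x, hx⟩, e.injective.extend_apply _ _ _⟩

section Ring

variable {R M : Type*} [CommRing R] [AddCommGroup M] [Module R M]

theorem encard_setOf_hasEigenvalue_le_finrank [IsDomain R] [IsTorsionFree R M] [Module.Finite R M]
    (f : End R M) : {c | f.HasEigenvalue c}.encard ≤ finrank R M := by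
  have hindep : iSupIndep f.eigenspace := f.eigenspaces_iSupIndep
  let _ : Fintype {c // f.eigenspace c ≠ ⊥} := hindep.fintypeNeBotOfFiniteDimensional
  calc {c | f.HasEigenvalue c}.encard
      = Fintype.card {c // f.eigenspace c ≠ ⊥} := by
        rw [← ENat.card_eq_coe_fintype_card]
        exact (ENat.card_coe_set_eq _).symm
    _ ≤ finrank R M := Nat.cast_le.2 hindep.subtype_ne_bot_le_finrank

theorem exists_range_sub_smul_one_le_of_finrank_quotient_eq_one [Nontrivial R] {f : End R M}
    {W : Submodule R M} [Module.Free R (M ⧸ W)] (hfW : W ∈ f.invtSubmodule)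
    (hW : finrank R (M ⧸ W) = 1) :
    ∃ c : R, LinearMap.range (f - c • 1) ≤ W := by
  obtain ⟨c, hc, -⟩ := LinearMap.existsUnique_eq_smul_id_of_finrank_eq_one hW (W.mapQ W f hfW)
  refine ⟨c, ?_⟩
  rintro _ ⟨x, rfl⟩
  have hx : W.mkQ (f x) = c • W.mkQ x := LinearMap.congr_fun hc (W.mkQ x)
  rw [← W.ker_mkQ, LinearMap.mem_ker]
  simp only [LinearMap.sub_apply, LinearMap.smul_apply, End.one_apply, map_sub, map_smul, hx,
    sub_self]

end Ring

section Field

variable {K V : Type*} [Field K] [AddCommGroup V] [Module K V] [FiniteDimensional K V]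

theorem hasEigenvalue_iff_range_sub_smul_one_ne_top {f : End K V} {c : K} :
    f.HasEigenvalue c ↔ LinearMap.range (f - c • 1) ≠ ⊤ := by
  rw [End.hasEigenvalue_iff, End.eigenspace_def, Ne, LinearMap.ker_eq_bot_iff_range_eq_top]

theorem range_sub_smul_one_eq_of_le {f : End K V} {c : K} {W : Submodule K V}
    (hc : finrank K (f.eigenspace c) ≤ 1) (hW : W ≠ ⊤) (hle : LinearMap.range (f - c • 1) ≤ W) :
    LinearMap.range (f - c • 1) = W := by
  refine Submodule.eq_of_le_of_finrank_le hle ?_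
  have hlt : finrank K W < finrank K V := Submodule.finrank_lt hW
  have hrank_nullity := LinearMap.finrank_range_add_finrank_ker (f - c • 1)
  rw [← End.eigenspace_def] at hrank_nullity
  omega

theorem exists_hasEigenvalue_range_sub_smul_one_eq {f : End K V}
    (hf : ∀ c, finrank K (f.eigenspace c) ≤ 1) {W : Submodule K V} (hfW : W ∈ f.invtSubmodule)
    (hW : finrank K W + 1 = finrank K V) :
    ∃ c, f.HasEigenvalue c ∧ LinearMap.range (f - c • 1) = W := by
  have hquot : finrank K (V ⧸ W) = 1 := by
    have := W.finrank_quotient_add_finrank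
    omega
  have hne_top : W ≠ ⊤ := by
    rintro rfl
    simp only [finrank_top, Nat.add_eq_left, one_ne_zero] at hW
  obtain ⟨c, hc⟩ := exists_range_sub_smul_one_le_of_finrank_quotient_eq_one hfW hquot
  exact ⟨c, hasEigenvalue_iff_range_sub_smul_one_ne_top.2 (ne_top_of_le_ne_top hne_top hc),
    range_sub_smul_one_eq_of_le (hf c) hne_top hc⟩

theorem at_most_three_invariant_planes_general (f : End K V)
    (hf : ∀ c, finrank K (f.eigenspace c) ≤ 1) :
    {W : Submodule K V | finrank K W + 1 = finrank K V ∧ W ∈ f.invtSubmodule}.encard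
      ≤ finrank K V :=
  calc {W : Submodule K V | finrank K W + 1 = finrank K V ∧ W ∈ f.invtSubmodule}.encard
      ≤ ((fun c => LinearMap.range (f - c • 1)) '' {c | f.HasEigenvalue c}).encard :=
        Set.encard_le_encard fun _ hW => exists_hasEigenvalue_range_sub_smul_one_eq hf hW.2 hW.1
    _ ≤ {c | f.HasEigenvalue c}.encard := Set.encard_image_le _ _
    _ ≤ finrank K V := encard_setOf_hasEigenvalue_le_finrank f

end Field

/-- Part (2) of Lemma 7.5 of the paper, in linear-algebra form: a
`ℂ`-endomorphism of `ℂ³` all of whose eigenspaces have dimension at most one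
has at most three invariant 2-dimensional subspaces. (A holomorphic vector
field on `ℂP²` with isolated zeros is tangent to at most 3 lines.) -/
theorem at_most_three_invariant_planes
    (M : (Fin 3 → ℂ) →ₗ[ℂ] (Fin 3 → ℂ))
    (h : ∀ c : ℂ, Module.finrank ℂ (Module.End.eigenspace M c) ≤ 1) :
    ∃ W₁ W₂ W₃ : Submodule ℂ (Fin 3 → ℂ),
      ∀ W : Submodule ℂ (Fin 3 → ℂ), Module.finrank ℂ W = 2 →
        W.map M ≤ W → (W = W₁ ∨ W = W₂ ∨ W = W₃) := by
  have hcard := at_most_three_invariant_planes_general M h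
  rw [finrank_fin_fun] at hcard
  obtain ⟨P, hP⟩ := exists_subset_range_of_encard_le hcard
  refine ⟨P 0, P 1, P 2, fun W hW hMW => ?_⟩
  obtain ⟨i, rfl⟩ := hP ⟨by rw [hW], (End.mem_invtSubmodule_iff_map_le M).2 hMW⟩
  fin_cases i <;> simp
end
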